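/- Let n ≥ 2 be an integer, k a PAC field whose characteristic does not divide n (equivalently, n is invertible in k), and M ∈ k[Y] a degree n Morse polynomial. Then every field extension E/k of degree n (automatically separable) can be realized by the polynomial M(Y) + b for some b ∈ k: there exists b ∈ k such that M(Y) + b is irreducible in k[Y] and E is generated over k by a root of M(Y) + b. -/

import Mathlib

/-!
Write `K` for an algebraic closure of `k` and `Ω` for an algebraic closure of `K(T)`, and assume
`M` monic (scaling by the leading coefficient reduces to this case).

**Generic monodromy.** The roots `y i ∈ Ω` of `M(Y) - T` are permuted by the automorphisms of `Ω`
over `K(T)`, and for a Morse polynomial every permutation arises (`monodromy_eq_top`). The action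
is transitive since `T = M(y i)` and each `y i` is transcendental over `K` (`trans_one`). It is
2-transitive (`trans_two`) because the difference quotient `(M(Y) - M(X)) / (Y - X)` is irreducible
over `K`: by Bézout and a comparison of leading forms at infinity (these are coprime because
`Y ^ n - 1` is separable), two nontrivial factors have a common zero in the affine plane
(`not_isCoprime_of_factor`), and a common zero `(x, y)` would be a pair of critical points with the
same value, or a double critical point (`irreducible_diffQuot`). Finally it contains a
transposition: over a critical value only two roots collide, so a nontrivial element of the inertia
group at a place above it swaps these two (`exists_swap_galois`). By 2-transitivity,
every transposition is a conjugate of this one.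

**Twisting.** By separability `E = k(α)`; index by `i` the `k`-embeddings `E → K` and let `a i` be
the corresponding conjugates of `α`. The resolvents `θ σ = ∑ i, a (σ i) * y i`, for `σ` a
permutation, are pairwise distinct (`resolvent_injective`), and the monodromy group permutes them
simply transitively. Hence the minimal polynomial `R` of `θ 1` over `k[T]` has exactly the `θ σ` as
roots and stays irreducible over `K` (`exists_resolvent`).

**Specialization.** As `k` is PAC, the curve `R(T, Z) = 0` has a rational point `(t, z)` with `t`
outside any prescribed finite set (`IsPAC.exists_point`), so that the `θ σ` remain distinct at `t`
(`exists_good_locus`). For a suitable numbering `w i` of the roots of `M(Y) - t` one gets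
`z = ∑ i, a i * w i ∈ k`. An automorphism of `K` over `k` permutes the `a i` and the `w i`, and
fixes `z`; distinctness of the resolvents forces the two permutations to agree. Thus
`k(a i) = k(w i)` (`mem_adjoin_of_resolvent`), which says that `E` is generated by a root of
`M(Y) - t`.

Throughout, extensions of `K[T]` (or `k[T]`) are given by an injective ring homomorphism `f` into
an algebraically closed field `Ω` together with the hypothesis `haf` that every element of `Ω` is
algebraic over the image; `f X` plays the role of `T`.
-/

open Polynomial

/-- A field `k` is PAC (pseudo algebraically closed): every polynomial in two
variables over `k` that remains irreducible over an algebraic closure of `k`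
has infinitely many zeros in `k × k`. -/
def IsPAC (k : Type*) [Field k] : Prop :=
  ∀ f : MvPolynomial (Fin 2) k,
    Irreducible (MvPolynomial.map (algebraMap k (AlgebraicClosure k)) f) →
    {x : k × k | MvPolynomial.eval ![x.1, x.2] f = 0}.Infinite

/-- `M` is a Morse polynomial: over an algebraic closure, the zeros of the
derivative `M'` are simple, and `M` takes pairwise distinct values at the
distinct zeros of `M'`. -/
def IsMorse {k : Type*} [Field k] (M : Polynomial k) : Prop :=
  (Polynomial.derivative (M.map (algebraMap k (AlgebraicClosure k)))).roots.Nodup ∧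
  ∀ β ∈ (Polynomial.derivative (M.map (algebraMap k (AlgebraicClosure k)))).roots,
    ∀ β' ∈ (Polynomial.derivative (M.map (algebraMap k (AlgebraicClosure k)))).roots,
      β ≠ β' →
        (M.map (algebraMap k (AlgebraicClosure k))).eval β ≠
          (M.map (algebraMap k (AlgebraicClosure k))).eval β'

/-! ### Irreducibility of the difference quotient of a Morse polynomial -/

section
/-- The homomorphism `P(X, Y) ↦ P(T, Y T)`, with `T` the outer variable of the target. The
coefficient of `T ^ i` is the homogeneous part of `P` of degree `i`, dehomogenized at `X = 1`; in
particular the leading coefficient is the leading form. -/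
noncomputable def leadHom (K : Type*) [Field K] : K[X][X] →+* K[X][X] :=
  eval₂RingHom (mapRingHom C) (C X * X)

variable {K : Type*} [Field K]

/-- The degree-`i` homogeneous part of a polynomial `P(X, Y)` has degree in `Y` at most both
`deg_Y P` and `i`. -/
theorem leadHom_coeff_natDegree_le (P : K[X][X]) (i : ℕ) :
    ((leadHom K P).coeff i).natDegree ≤ P.natDegree ∧ ((leadHom K P).coeff i).natDegree ≤ i := by
  have h : (leadHom K P).coeff i = ∑ j ∈ Finset.range (P.natDegree + 1),
      (((P.coeff j).map C * (C X * X) ^ j : K[X][X])).coeff i := by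
    rw [leadHom, coe_eval₂RingHom, eval₂_eq_sum_range, finsetSum_coeff]; rfl
  have h2 : ∀ j, (((P.coeff j).map C * (C X * X) ^ j : K[X][X])).coeff i =
      if j ≤ i then C ((P.coeff j).coeff (i - j)) * X ^ j else 0 := by
    intro j
    rw [mul_pow, ← C_pow, ← mul_assoc, coeff_mul_X_pow', coeff_mul_C, coeff_map]
  rw [h]
  constructor
  · refine natDegree_sum_le_of_forall_le _ _ fun j hj => ?_
    rw [h2]
    split_ifs
    · exact (natDegree_C_mul_X_pow_le _ _).trans (by simpa [Nat.lt_succ_iff] using hj)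
    · simp
  · refine natDegree_sum_le_of_forall_le _ _ fun j hj => ?_
    rw [h2]
    split_ifs with hji
    · exact (natDegree_C_mul_X_pow_le _ _).trans hji
    · simp

/-- The degree-`i` homogeneous part of `M(Y) - M(X)` is `m_i (Y ^ i - X ^ i)`, where `m_i` is the
`i`-th coefficient of `M`. -/
theorem leadHom_diff_coeff (M : K[X]) (i : ℕ) :
    (leadHom K (M.map C - C M)).coeff i = C (M.coeff i) * (X ^ i - 1) := by
  induction M using Polynomial.induction_on' with
  | add p q hp hq =>
    have : ((p + q).map C - C (p + q) : K[X][X]) = (p.map C - C p) + (q.map C - C q) := by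
      simp; ring
    rw [this, map_add, coeff_add, hp, hq]; simp; ring
  | monomial m a =>
    have : leadHom K ((monomial m a : K[X]).map C - C (monomial m a)) =
        C (C a * (X ^ m - 1)) * X ^ m := by
      simp only [leadHom, map_sub, coe_eval₂RingHom, eval₂_C, eval₂_X,
        coe_mapRingHom, ← C_mul_X_pow_eq_monomial, Polynomial.map_mul, Polynomial.map_pow, map_C,
        map_X, map_mul, map_pow, map_one]
      ring
    rw [this, coeff_C_mul, coeff_X_pow, coeff_monomial]
    by_cases h : i = m
    · subst h; simp
    · simp [h, Ne.symm h]

/-- Nullstellensatz for two polynomials in the plane. -/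
theorem exists_common_zero [IsAlgClosed K] {G H : K[X][X]} (h : ¬ IsCoprime G H) :
    ∃ x y : K, (G.map (evalRingHom x)).eval y = 0 ∧ (H.map (evalRingHom x)).eval y = 0 := by
  rw [← Ideal.isCoprime_span_singleton_iff, Ideal.isCoprime_iff_sup_eq] at h
  obtain ⟨m, hm, hle⟩ := Ideal.exists_le_maximal _ h
  let := Ideal.Quotient.field m
  have : Algebra.FiniteType K K[X][X] := Algebra.FiniteType.trans (S := K[X]) inferInstance inferInstance
  have : Algebra.FiniteType K (K[X][X] ⧸ m) :=
    Algebra.FiniteType.of_surjective (Ideal.Quotient.mkₐ K m) (Ideal.Quotient.mkₐ_surjective K m)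
  have := finite_of_finite_type_of_isJacobsonRing K (K[X][X] ⧸ m)
  have hb := IsAlgClosed.algebraMap_bijective_of_isIntegral (k := K) (K := K[X][X] ⧸ m)
  obtain ⟨x, hx⟩ := hb.2 (Ideal.Quotient.mk m (C X))
  obtain ⟨y, hy⟩ := hb.2 (Ideal.Quotient.mk m X)
  have key : ((algebraMap K (K[X][X] ⧸ m)).comp
      ((evalRingHom y).comp (mapRingHom (evalRingHom x)))) = Ideal.Quotient.mk m := by
    ext a
    · simp; rfl
    · simp [hx]
    · simp [hy]
  refine ⟨x, y, ?_, ?_⟩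
  · apply hb.1
    have := RingHom.congr_fun key G
    simp only [RingHom.comp_apply, coe_evalRingHom, coe_mapRingHom] at this
    rw [this, map_zero, Ideal.Quotient.eq_zero_iff_mem]
    exact hle (Ideal.mem_sup_left (Ideal.mem_span_singleton_self G))
  · apply hb.1
    have := RingHom.congr_fun key H
    simp only [RingHom.comp_apply, coe_evalRingHom, coe_mapRingHom] at this
    rw [this, map_zero, Ideal.Quotient.eq_zero_iff_mem]
    exact hle (Ideal.mem_sup_right (Ideal.mem_span_singleton_self H))

/-- Nontrivial factors `G`, `H` of the difference quotient `(M(Y) - M(X)) / (Y - X)` do not generate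
the unit ideal. Their leading forms `g`, `h` are coprime, since `(Y - 1) g h = Y ^ n - 1` is
separable, and they have full degree in `Y`. In a Bézout relation `A G + B H = 1` with
`deg_Y B < deg_Y G`, the leading forms must cancel, so `g` divides the leading form of `B`, which
contradicts the degree bound. -/
theorem not_isCoprime_of_factor {n : ℕ} (hn : (n : K) ≠ 0) {M : K[X]} (hM : M.Monic)
    (hdeg : M.natDegree = n) {G H : K[X][X]} (hG : G.Monic) (hH : H.Monic)
    (hGH : (X - C X) * (G * H) = M.map C - C M) (hG0 : G.natDegree ≠ 0) (hH0 : H.natDegree ≠ 0) :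
    ¬ IsCoprime G H := by
  rintro ⟨a, b, hab⟩
  have hn0 : n ≠ 0 := by rintro rfl; simp at hn
  set φ := leadHom K with hφ
  have hF := leadHom_diff_coeff M
  have hFd : (φ (M.map C - C M)).natDegree = n := by
    apply natDegree_eq_of_le_of_coeff_ne_zero
    · rw [natDegree_le_iff_coeff_eq_zero]
      intro i hi
      rw [hF, coeff_eq_zero_of_natDegree_lt (by omega)]; simp
    · rw [hF, ← hdeg, hM.coeff_natDegree, C_1, one_mul, hdeg]
      exact (X_pow_sub_C_ne_zero (Nat.pos_of_ne_zero hn0) (1 : K))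
  have hFl : (φ (M.map C - C M)).leadingCoeff = X ^ n - 1 := by
    rw [leadingCoeff, hFd, hF, ← hdeg, hM.coeff_natDegree, C_1, one_mul]
  have hXC : φ (X - C X) = C (X - 1) * X := by
    simp [hφ, leadHom]; ring
  set g := (φ G).leadingCoeff with hg
  set h := (φ H).leadingCoeff with hh
  have hprod : (X - 1) * (g * h) = (X ^ n - 1 : K[X]) := by
    rw [← hFl, ← hGH, map_mul, map_mul, leadingCoeff_mul, leadingCoeff_mul, hXC, leadingCoeff_mul,
      leadingCoeff_C, leadingCoeff_X, mul_one]
  have hsep : (X ^ n - 1 : K[X]).Separable := by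
    simpa using separable_X_pow_sub_C (1 : K) hn one_ne_zero
  have hcop : IsCoprime g h := by
    rw [← hprod] at hsep
    exact hsep.of_mul_right.isCoprime
  have hne : (X ^ n - 1 : K[X]) ≠ 0 := hsep.ne_zero
  have hgh0 : g * h ≠ 0 := by
    intro h0; rw [h0, mul_zero] at hprod; exact hne hprod.symm
  have hg_ne := left_ne_zero_of_mul hgh0
  have hh_ne := right_ne_zero_of_mul hgh0
  have hX1 : (X - 1 : K[X]).natDegree = 1 := by simpa using natDegree_X_sub_C (1 : K)
  have hX1' : (X - 1 : K[X]) ≠ 0 := by simpa using X_sub_C_ne_zero (1 : K)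
  have hdsum : 1 + (g.natDegree + h.natDegree) = n := by
    have := congrArg natDegree hprod
    rw [natDegree_mul hX1' hgh0, natDegree_mul hg_ne hh_ne, hX1] at this
    rw [this]; simpa using natDegree_X_pow_sub_C (n := n) (r := (1 : K))
  have hdsum' : 1 + (G.natDegree + H.natDegree) = n := by
    have h1 : ((X - C X) * (G * H) : K[X][X]).natDegree = 1 + (G.natDegree + H.natDegree) := by
      rw [(monic_X_sub_C _).natDegree_mul (hG.mul hH), hG.natDegree_mul hH, natDegree_X_sub_C]
    rw [← h1, hGH, natDegree_sub_C, natDegree_map_eq_of_injective C_injective, hdeg]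
  have hgle : g.natDegree ≤ G.natDegree := (leadHom_coeff_natDegree_le G _).1
  have hhle : h.natDegree ≤ H.natDegree := (leadHom_coeff_natDegree_le H _).1
  have hgG : g.natDegree = G.natDegree := by omega
  have hhH : h.natDegree = H.natDegree := by omega
  have hsG : h.natDegree ≤ (φ H).natDegree := (leadHom_coeff_natDegree_le H _).2
  have hsG' : g.natDegree ≤ (φ G).natDegree := (leadHom_coeff_natDegree_le G _).2
  -- reduce the Bezout coefficient of `H` modulo `G`
  set B := b %ₘ G with hB
  set A := a + (b /ₘ G) * H with hA
  have hAB : A * G + B * H = 1 := by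
    have := modByMonic_add_div b G
    rw [← hab, hA, hB]
    linear_combination H * this
  have hφAB : φ A * φ G + φ B * φ H = 1 := by
    rw [← map_mul, ← map_mul, ← map_add, hAB, map_one]
  have hφG : φ G ≠ 0 := leadingCoeff_ne_zero.mp hg_ne
  have hφH : φ H ≠ 0 := leadingCoeff_ne_zero.mp hh_ne
  have hB0 : φ B ≠ 0 := by
    intro h0
    rw [h0, zero_mul, add_zero] at hφAB
    have := natDegree_eq_zero_of_isUnit (IsUnit.of_mul_eq_one_right _ hφAB)
    omega
  have hBH : 0 < (φ B * φ H).natDegree := by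
    rw [natDegree_mul hB0 hφH]; omega
  have hlead : (φ A).leadingCoeff * g = - ((φ B).leadingCoeff * h) := by
    rw [hg, hh, ← leadingCoeff_mul, ← leadingCoeff_mul, eq_sub_of_add_eq hφAB,
      leadingCoeff_sub_of_degree_lt']
    rw [degree_one]
    exact natDegree_pos_iff_degree_pos.mp hBH
  have hdvd : g ∣ (φ B).leadingCoeff := by
    apply hcop.dvd_of_dvd_mul_right
    rw [← dvd_neg, ← hlead]
    exact dvd_mul_left _ _
  have h1 := natDegree_le_of_dvd hdvd (leadingCoeff_ne_zero.mpr hB0)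
  have h2 : ((φ B).leadingCoeff).natDegree ≤ B.natDegree := (leadHom_coeff_natDegree_le B _).1
  have h3 : B.natDegree < G.natDegree := by
    apply natDegree_modByMonic_lt b hG
    rintro rfl; simp at hG0
  omega

/-- The curve `(M(Y) - M(X)) / (Y - X) = 0` of a Morse polynomial `M` is irreducible: a common zero
`(x, y)` of two factors consists of critical points of `M` with `M(x) = M(y)`, so `x = y`, and then
the second derivative of `M` vanishes there. -/
theorem irreducible_diffQuot [IsAlgClosed K] {n : ℕ} (hn2 : 2 ≤ n) (hn : (n : K) ≠ 0)
    {M : K[X]} (hM : M.Monic) (hdeg : M.natDegree = n)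
    (hsimple : ∀ β, (derivative M).eval β = 0 → (derivative (derivative M)).eval β ≠ 0)
    (hval : ∀ β β', (derivative M).eval β = 0 → (derivative M).eval β' = 0 →
      M.eval β = M.eval β' → β = β')
    {Q : K[X][X]} (hQ : (X - C X) * Q = M.map C - C M) : Q.Monic ∧ Irreducible Q := by
  have hFm : (M.map C - C M : K[X][X]).Monic := by
    apply (hM.map C).sub_of_left
    rw [degree_map_eq_of_injective C_injective]
    exact degree_C_le.trans_lt (natDegree_pos_iff_degree_pos.mp (by omega))
  have hQm : Q.Monic := by
    rw [← hQ] at hFm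
    exact (monic_X_sub_C _).of_mul_monic_left hFm
  have hQd : 1 + Q.natDegree = n := by
    rw [← natDegree_X_sub_C (X : K[X]), ← (monic_X_sub_C _).natDegree_mul hQm, hQ,
      natDegree_sub_C, natDegree_map_eq_of_injective C_injective, hdeg]
  refine ⟨hQm, ?_⟩
  rw [hQm.irreducible_iff_natDegree]
  refine ⟨by rintro rfl; simp at hQd; omega, fun G H hG hH hGH => ?_⟩
  by_contra! hc
  rw [← hGH] at hQ
  obtain ⟨x, y, hGx, hHx⟩ := exists_common_zero
    (not_isCoprime_of_factor hn hM hdeg hG hH hQ hc.1 hc.2)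
  -- restriction to the vertical line through the common zero
  have hv : (X - C x) * (G.map (evalRingHom x) * H.map (evalRingHom x)) = M - C (M.eval x) := by
    have := congrArg (Polynomial.map (evalRingHom x)) hQ
    have hid : (evalRingHom x).comp C = RingHom.id K := by ext; simp
    simpa [Polynomial.map_map, hid] using this
  -- restriction to the horizontal line through the common zero
  have hh : (C y - X) * (G.eval (C y) * H.eval (C y)) = C (M.eval y) - M := by
    have := congrArg (Polynomial.eval (C y)) hQ
    simpa [eval_map, ← hom_eval₂] using this
  have comm : ∀ P : K[X][X], (P.map (evalRingHom x)).eval y = (P.eval (C y)).eval x := by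
    intro P
    rw [eval_map, ← coe_evalRingHom x, eval, hom_eval₂]; simp
  have e1 : (derivative M).eval y = 0 := by
    have := congrArg (fun P => (derivative P).eval y) hv
    simpa [hGx, hHx] using this.symm
  have e2 : (derivative M).eval x = 0 := by
    have := congrArg (fun P => (derivative P).eval x) hh
    rw [comm] at hGx hHx
    simpa [hGx, hHx] using this.symm
  have e3 : M.eval x = M.eval y := by
    have := congrArg (Polynomial.eval y) hv
    simp [hGx] at this
    exact (sub_eq_zero.mp this.symm).symm
  have hxy := hval x y e2 e1 e3
  subst hxy
  apply hsimple x e2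
  have := congrArg (fun P => (derivative (derivative P)).eval x) hv
  simpa [hGx, hHx] using this.symm
end

/-! ### Places of extensions of `K[T]` and inertia -/

section
variable {K : Type*} [Field K]

/-- Every evaluation `T ↦ t` extends to integral extensions of `K[T]` (lying over). -/
theorem exists_specialization [IsAlgClosed K] {B : Type*} [CommRing B] [Algebra K[X] B]
    [Algebra.IsIntegral K[X] B] [FaithfulSMul K[X] B] (t : K) :
    ∃ ψ : B →+* K, ∀ p : K[X], ψ (algebraMap K[X] B p) = p.eval t := by
  have hprime : (Ideal.span {(X - C t : K[X])}).IsPrime :=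
    (Ideal.span_singleton_prime (X_sub_C_ne_zero t)).mpr (prime_X_sub_C t)
  obtain ⟨P, hP, hPover⟩ := (Ideal.span {(X - C t : K[X])}).nonempty_primesOver (S := B)
  let φ : K[X] →+* B ⧸ P := (Ideal.Quotient.mk P).comp (algebraMap K[X] B)
  let : Algebra K (B ⧸ P) := (φ.comp C).toAlgebra
  have hφ : φ = (algebraMap K (B ⧸ P)).comp (evalRingHom t) := by
    ext a
    · simp [RingHom.algebraMap_toAlgebra, φ]
    · have : φ (X - C t) = 0 := by
        have : (X - C t : K[X]) ∈ P.under K[X] := by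
          rw [← hPover.over]; exact Ideal.mem_span_singleton_self _
        exact Ideal.Quotient.eq_zero_iff_mem.mpr this
      rw [map_sub, sub_eq_zero] at this
      simpa [RingHom.algebraMap_toAlgebra] using this
  have hInteg : Algebra.IsIntegral K (B ⧸ P) := by
    constructor
    intro x
    obtain ⟨b, rfl⟩ := Ideal.Quotient.mk_surjective x
    obtain ⟨q, hq, hq0⟩ := Algebra.IsIntegral.isIntegral (R := K[X]) b
    refine ⟨q.map (evalRingHom t), hq.map _, ?_⟩
    rw [eval₂_map, ← hφ]
    have := congrArg (Ideal.Quotient.mk P) hq0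
    rwa [hom_eval₂, map_zero] at this
  have hb := IsAlgClosed.algebraMap_bijective_of_isIntegral (k := K) (K := B ⧸ P)
  let e := RingEquiv.ofBijective _ hb
  refine ⟨(e.symm : B ⧸ P →+* K).comp (Ideal.Quotient.mk P), fun p => ?_⟩
  change e.symm (φ p) = _
  rw [RingEquiv.symm_apply_eq, hφ]
  rfl

theorem perfectField_residueField [IsAlgClosed K] (p : Ideal K[X]) [p.IsMaximal] :
    PerfectField p.ResidueField := by
  have hs : Function.Surjective (algebraMap K[X] p.ResidueField) :=
    p.algebraMap_residueField_surjective
  have : Algebra.FiniteType K p.ResidueField :=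
    Algebra.FiniteType.of_surjective (IsScalarTower.toAlgHom K K[X] p.ResidueField) hs
  have := finite_of_finite_type_of_isJacobsonRing K p.ResidueField
  exact Algebra.IsAlgebraic.perfectField (K := K)

/-- If the place `ψ` above `T = t` is ramified, in the sense that `T - t` lies in the square of its
kernel, then some nontrivial Galois automorphism acts trivially modulo `ψ`. -/
theorem exists_inertia [IsAlgClosed K] {F L : Type*} [Field F] [Algebra K[X] F]
    [IsFractionRing K[X] F] [Field L] [Algebra F L] [Algebra K[X] L] [IsScalarTower K[X] F L]
    [FiniteDimensional F L] [IsGalois F L] {t : K} (ψ : integralClosure K[X] L →+* K)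
    (hψ : ∀ p : K[X], ψ (algebraMap K[X] _ p) = p.eval t)
    (hram : algebraMap K[X] (integralClosure K[X] L) (X - C t) ∈ (RingHom.ker ψ) ^ 2) :
    ∃ σ : L ≃ₐ[F] L, σ ≠ 1 ∧
      ∀ b c : integralClosure K[X] L, σ (b : L) = c → ψ c = ψ b := by
  have := IsIntegralClosure.isDedekindDomain K[X] F L (integralClosure K[X] L)
  have := IsIntegralClosure.isFractionRing_of_finite_extension K[X] F L (integralClosure K[X] L)
  have := IsIntegralClosure.finite K[X] F L (integralClosure K[X] L)
  let : MulSemiringAction (L ≃ₐ[F] L) (integralClosure K[X] L) :=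
    IsIntegralClosure.MulSemiringAction K[X] F L (integralClosure K[X] L)
  have := IsGaloisGroup.of_isFractionRing (L ≃ₐ[F] L) K[X] (integralClosure K[X] L) F L
  set p : Ideal K[X] := Ideal.span {X - C t} with hp
  set P : Ideal (integralClosure K[X] L) := RingHom.ker ψ with hP
  have hpbot : p ≠ ⊥ := by simp [hp, X_sub_C_ne_zero]
  have : p.IsPrime := (Ideal.span_singleton_prime (X_sub_C_ne_zero t)).mpr (prime_X_sub_C t)
  have : p.IsMaximal := this.isMaximal hpbot
  have : P.IsPrime := RingHom.ker_isPrime ψ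
  have hover : P.LiesOver p := by
    constructor
    ext q
    rw [hp, Ideal.mem_span_singleton, dvd_iff_isRoot, Ideal.mem_comap, hP, RingHom.mem_ker, hψ]
    rfl
  have := perfectField_residueField p
  have : FaithfulSMul K[X] L := FaithfulSMul.trans K[X] F L
  have hcard := Ideal.card_inertia_eq_ramificationIdxIn (G := L ≃ₐ[F] L) p P
  have hmap : p.map (algebraMap K[X] (integralClosure K[X] L)) ≤ P ^ 2 := by
    rw [hp, Ideal.map_span, Set.image_singleton, Ideal.span_singleton_le_iff_mem]
    exact hram
  rw [Ideal.ramificationIdxIn_eq_ramificationIdx p P (L ≃ₐ[F] L),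
    ← Ideal.ramificationIdx'_eq_ramificationIdx p P hpbot] at hcard
  have hne : Nat.card (P.inertia (L ≃ₐ[F] L)) ≠ 1 := by
    rw [hcard]
    exact (Ideal.ramificationIdx'_ne_one_iff (hmap.trans (Ideal.pow_le_self two_ne_zero))).mpr hmap
  have hbot : P.inertia (L ≃ₐ[F] L) ≠ ⊥ := by
    intro h; apply hne; rw [h]; simp
  obtain ⟨⟨σ, hσ⟩, hσ1⟩ := Subgroup.ne_bot_iff_exists_ne_one.mp hbot
  refine ⟨σ, fun h' => hσ1 (Subtype.ext h'), fun b c hbc => ?_⟩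
  have h1 := hσ b
  have h2 : σ • b = c := by
    apply Subtype.ext
    rw [← hbc]
    exact algebraMap_galRestrict_apply K[X] σ b
  rw [h2] at h1
  have h3 : c - b ∈ P := h1
  rw [hP, RingHom.mem_ker, map_sub, sub_eq_zero] at h3
  exact h3

end

/-! ### Double transitivity of the monodromy -/

section
variable {K : Type*} [Field K]

/-- Uniqueness of algebraic closures, for algebraic closures presented by ring homomorphisms. -/
theorem exists_ringEquiv_comp {A Ω₁ Ω₂ : Type*} [CommRing A] [IsDomain A]
    [Field Ω₁] [IsAlgClosed Ω₁] [Field Ω₂] [IsAlgClosed Ω₂] (f : A →+* Ω₁) (g : A →+* Ω₂)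
    (hf : Function.Injective f) (hg : Function.Injective g)
    (haf : ∀ z : Ω₁, ∃ p : A[X], p ≠ 0 ∧ p.eval₂ f z = 0)
    (hag : ∀ z : Ω₂, ∃ p : A[X], p ≠ 0 ∧ p.eval₂ g z = 0) :
    ∃ τ : Ω₁ ≃+* Ω₂, ∀ a, τ (f a) = g a := by
  let := f.toAlgebra
  let := g.toAlgebra
  have : FaithfulSMul A Ω₁ := (faithfulSMul_iff_algebraMap_injective A Ω₁).mpr hf
  have : FaithfulSMul A Ω₂ := (faithfulSMul_iff_algebraMap_injective A Ω₂).mpr hg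
  have : IsAlgClosure A Ω₁ := ⟨inferInstance, ⟨haf⟩⟩
  have : IsAlgClosure A Ω₂ := ⟨inferInstance, ⟨hag⟩⟩
  exact ⟨(IsAlgClosure.equiv A Ω₁ Ω₂).toRingEquiv, (IsAlgClosure.equiv A Ω₁ Ω₂).commutes⟩

attribute [local instance] FractionRing.liftAlgebra in
/-- Roots of a monic irreducible polynomial over an integrally closed domain are conjugate. -/
theorem exists_ringEquiv_of_root {A Ω : Type*} [CommRing A] [IsDomain A] [IsIntegrallyClosed A]
    [Field Ω] [IsAlgClosed Ω] (f : A →+* Ω) (hf : Function.Injective f)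
    (haf : ∀ z : Ω, ∃ p : A[X], p ≠ 0 ∧ p.eval₂ f z = 0)
    {q : A[X]} (hq : q.Monic) (hirr : Irreducible q) {x y : Ω}
    (hx : q.eval₂ f x = 0) (hy : q.eval₂ f y = 0) :
    ∃ τ : Ω ≃+* Ω, (∀ a, τ (f a) = f a) ∧ τ x = y := by
  let := f.toAlgebra
  have : FaithfulSMul A Ω := (faithfulSMul_iff_algebraMap_injective A Ω).mpr hf
  have hal : Algebra.IsAlgebraic A Ω := ⟨haf⟩
  have : Algebra.IsAlgebraic (FractionRing A) Ω :=
    ⟨fun z => (hal.isAlgebraic z).extendScalars (IsFractionRing.injective A _)⟩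
  have hirr' := (hq.irreducible_iff_irreducible_map_fraction_map (K := FractionRing A)).mp hirr
  have hx' : aeval x (q.map (algebraMap A (FractionRing A))) = 0 := by
    rw [aeval_map_algebraMap]; exact hx
  have hy' : aeval y (q.map (algebraMap A (FractionRing A))) = 0 := by
    rw [aeval_map_algebraMap]; exact hy
  have hmx := minpoly.eq_of_irreducible_of_monic hirr' hx' (hq.map _)
  have : Normal (FractionRing A) Ω :=
    normal_iff.mpr fun z => ⟨Algebra.IsIntegral.isIntegral z, IsAlgClosed.splits _⟩
  obtain ⟨τ, hτ⟩ := minpoly.exists_algEquiv_of_root' (K := FractionRing A) (x := y) (y := x)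
    (Algebra.IsAlgebraic.isAlgebraic x) (by rw [← hmx]; exact hy')
  refine ⟨τ.toRingEquiv, fun a => ?_, hτ⟩
  have := τ.commutes (algebraMap A (FractionRing A) a)
  rwa [← IsScalarTower.algebraMap_apply] at this

theorem exists_preimage_of_root [IsAlgClosed K] {Ω : Type*} [Field Ω] (κ : K →+* Ω) {q : K[X]}
    (hq : q ≠ 0) {z : Ω} (hz : q.eval₂ κ z = 0) : ∃ c, κ c = z :=
  (IsAlgClosed.splits q).mem_range_of_isRoot hq (by rw [IsRoot, eval_map, hz])

variable {Ω : Type*} [Field Ω] {f : K[X] →+* Ω}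
  {M : K[X]}

/-- A root `z` of `M(Y) = T` is transcendental over `K`, as `T` is. -/
theorem transcendental_root [IsAlgClosed K] (hf : Function.Injective f) {z : Ω}
    (hz : M.eval₂ (f.comp C) z = f X) : Function.Injective (eval₂RingHom (f.comp C) z) := by
  rw [injective_iff_map_eq_zero]
  intro q hq
  by_contra hq0
  obtain ⟨c, rfl⟩ := exists_preimage_of_root (f.comp C) hq0 hq
  have : f (X - C (M.eval c)) = 0 := by
    rw [map_sub, ← hz, eval₂_at_apply]; simp
  exact X_sub_C_ne_zero _ ((injective_iff_map_eq_zero f).mp hf _ this)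

/-- For a root `z` of `M(Y) = T`, the embedding `f` of `K[T]` factors as `T ↦ M(Z)`, `Z ↦ z`. -/
theorem eval₂RingHom_comp {z : Ω}
    (hz : M.eval₂ (f.comp C) z = f X) :
    f = (eval₂RingHom (f.comp C) z).comp (compRingHom M) := by
  ext a
  · simp
  · simp [hz]

theorem algebraic_root (hM : M.natDegree ≠ 0)
    (haf : ∀ z : Ω, ∃ p : K[X][X], p ≠ 0 ∧ p.eval₂ f z = 0) {z : Ω}
    (hz : M.eval₂ (f.comp C) z = f X) (w : Ω) :
    ∃ p : K[X][X], p ≠ 0 ∧ p.eval₂ (eval₂RingHom (f.comp C) z) w = 0 := by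
  obtain ⟨p, hp, hp0⟩ := haf w
  refine ⟨p.map (compRingHom M), ?_, ?_⟩
  · rwa [Ne, Polynomial.map_eq_zero_iff]
    rw [injective_iff_map_eq_zero]
    intro q hq
    have : q.comp M = 0 := hq
    rw [comp_eq_zero_iff] at this
    rcases this with h | ⟨_, h⟩
    · exact h
    · exact absurd (by rw [h, natDegree_C]) hM
  · rw [eval₂_map, ← eval₂RingHom_comp hz, hp0]

/-- The monodromy is transitive: `K(z)` and `K(w)` are isomorphic over `K(T)` by `z ↦ w`. -/
theorem trans_one [IsAlgClosed K] [IsAlgClosed Ω] (hf : Function.Injective f) (hM : M.natDegree ≠ 0)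
    (haf : ∀ z : Ω, ∃ p : K[X][X], p ≠ 0 ∧ p.eval₂ f z = 0) {z w : Ω}
    (hz : M.eval₂ (f.comp C) z = f X) (hw : M.eval₂ (f.comp C) w = f X) :
    ∃ τ : Ω ≃+* Ω, (∀ a, τ (f a) = f a) ∧ τ z = w := by
  obtain ⟨τ, hτ⟩ := exists_ringEquiv_comp _ _ (transcendental_root hf hz)
    (transcendental_root hf hw) (algebraic_root hM haf hz) (algebraic_root hM haf hw)
  refine ⟨τ, fun a => ?_, by simpa using hτ X⟩
  have h1 := congrArg (fun g => g a) (eval₂RingHom_comp hz)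
  have h2 := congrArg (fun g => g a) (eval₂RingHom_comp hw)
  simp only [RingHom.comp_apply] at h1 h2
  rw [h1, hτ, ← h2, ← h1]

/-- The stabilizer of a root `z` is transitive on the other roots, which are the roots of the
irreducible polynomial `(M(Y) - M(z)) / (Y - z)` over `K[z]`. -/
theorem trans_two [IsAlgClosed K] [IsAlgClosed Ω] (hf : Function.Injective f) {n : ℕ} (hn2 : 2 ≤ n)
    (hn : (n : K) ≠ 0)
    (hM : M.Monic) (hdeg : M.natDegree = n)
    (hsimple : ∀ β, (derivative M).eval β = 0 → (derivative (derivative M)).eval β ≠ 0)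
    (hval : ∀ β β', (derivative M).eval β = 0 → (derivative M).eval β' = 0 →
      M.eval β = M.eval β' → β = β')
    (haf : ∀ z : Ω, ∃ p : K[X][X], p ≠ 0 ∧ p.eval₂ f z = 0) {z w v : Ω}
    (hz : M.eval₂ (f.comp C) z = f X) (hw : M.eval₂ (f.comp C) w = f X)
    (hv : M.eval₂ (f.comp C) v = f X) (hwz : w ≠ z) (hvz : v ≠ z) :
    ∃ τ : Ω ≃+* Ω, (∀ a, τ (f a) = f a) ∧ τ z = z ∧ τ w = v := by
  have hroot : (M.map C - C M : K[X][X]).eval X = 0 := by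
    rw [eval_sub, eval_map, eval_C, eval₂_C_X, sub_self]
  obtain ⟨Q, hQ⟩ := dvd_iff_isRoot.mpr hroot
  obtain ⟨hQm, hQi⟩ := irreducible_diffQuot hn2 hn hM hdeg hsimple hval hQ.symm
  have hM0 : M.natDegree ≠ 0 := by omega
  have key : ∀ u, M.eval₂ (f.comp C) u = f X → u ≠ z →
      Q.eval₂ (eval₂RingHom (f.comp C) z) u = 0 := by
    intro u hu huz
    have h := congrArg (eval₂ (eval₂RingHom (f.comp C) z) u) hQ
    have hc : (eval₂RingHom (f.comp C) z).comp C = f.comp C := by ext; simp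
    rw [eval₂_sub, eval₂_map, eval₂_C, eval₂_mul, eval₂_sub, eval₂_X, eval₂_C, hc, hu] at h
    simp only [coe_eval₂RingHom, eval₂_X, hz, sub_self] at h
    rcases mul_eq_zero.mp h.symm with h | h
    · exact absurd (sub_eq_zero.mp h) huz
    · exact h
  obtain ⟨τ, hτ, hτw⟩ := exists_ringEquiv_of_root _ (transcendental_root hf hz)
    (algebraic_root hM0 haf hz) hQm hQi (key w hw hwz) (key v hv hvz)
  refine ⟨τ, fun a => ?_, by simpa using hτ X, hτw⟩
  rw [eval₂RingHom_comp hz, RingHom.comp_apply, hτ, ← RingHom.comp_apply]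
end

/-! ### A transposition in the monodromy group -/

section
variable {K : Type*} [Field K]

theorem derivative_prod_eval_eq_zero {R ι : Type*} [CommRing R] [Fintype ι] [DecidableEq ι]
    {y : ι → R} {i j : ι} (hij : i ≠ j) (h : y i = y j) :
    (derivative (∏ l, (X - C (y l)))).eval (y i) = 0 := by
  rw [← Finset.mul_prod_erase _ _ (Finset.mem_univ i),
    ← Finset.mul_prod_erase _ _ (Finset.mem_erase.mpr ⟨hij.symm, Finset.mem_univ j⟩)]
  simp [derivative_mul, h]

theorem derivative_derivative_prod_eval_eq_zero {R ι : Type*} [CommRing R] [Fintype ι]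
    [DecidableEq ι]
    {y : ι → R} {i j k : ι} (hij : i ≠ j) (hik : i ≠ k) (hjk : j ≠ k)
    (h : y i = y j) (h' : y i = y k) :
    (derivative (derivative (∏ l, (X - C (y l))))).eval (y i) = 0 := by
  rw [← Finset.mul_prod_erase _ _ (Finset.mem_univ i),
    ← Finset.mul_prod_erase _ _ (Finset.mem_erase.mpr ⟨hij.symm, Finset.mem_univ j⟩),
    ← Finset.mul_prod_erase _ _ (Finset.mem_erase.mpr ⟨hjk.symm, Finset.mem_erase.mpr
      ⟨hik.symm, Finset.mem_univ k⟩⟩), ← h, ← h']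
  simp [derivative_mul]

theorem derivative_ne_zero_of_cast {M : K[X]} {n : ℕ} (hn2 : 2 ≤ n)
    (hn : (n : K) ≠ 0) (hM : M.Monic) (hdeg : M.natDegree = n) : derivative M ≠ 0 := by
  intro h
  have := congrArg (fun p => coeff p (n - 1)) h
  simp only [coeff_derivative, coeff_zero] at this
  have h1 : n - 1 + 1 = n := by omega
  have h2 : ((n - 1 : ℕ) : K) + 1 = n := by exact_mod_cast congrArg (Nat.cast (R := K)) h1
  rw [h1, h2, ← hdeg, hM.coeff_natDegree, one_mul, hdeg] at this
  exact hn this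

variable {Ω : Type*} [Field Ω] {f : K[X] →+* Ω} {M : K[X]} {ι : Type*} [Fintype ι]
  {y : ι → Ω}

theorem root_of_prod (hy : M.map (f.comp C) - C (f X) = ∏ i, (X - C (y i))) (i : ι) :
    M.eval₂ (f.comp C) (y i) = f X := by
  have := congrArg (eval (y i)) hy
  rw [eval_sub, eval_map, eval_C, eval_prod, Finset.prod_eq_zero (Finset.mem_univ i) (by simp),
    sub_eq_zero] at this
  exact this

theorem exists_index_of_root (hy : M.map (f.comp C) - C (f X) = ∏ i, (X - C (y i))) {z : Ω}
    (hz : M.eval₂ (f.comp C) z = f X) : ∃ i, z = y i := by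
  have := congrArg (eval z) hy
  rw [eval_sub, eval_map, eval_C, hz, sub_self, eval_prod, eq_comm, Finset.prod_eq_zero_iff] at this
  obtain ⟨i, -, hi⟩ := this
  exact ⟨i, by simpa [sub_eq_zero] using hi⟩

theorem injective_roots [IsAlgClosed K] (hf : Function.Injective f) (hM' : derivative M ≠ 0)
    (hy : M.map (f.comp C) - C (f X) = ∏ i, (X - C (y i))) : Function.Injective y := by
  classical
  intro i j h
  by_contra hij
  have h1 := derivative_prod_eval_eq_zero hij h
  rw [← hy, derivative_sub, derivative_C, sub_zero, derivative_map, eval_map] at h1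
  have := transcendental_root hf (root_of_prod hy i)
  exact hM' ((injective_iff_map_eq_zero _).mp this _ h1)

/-- A factorization of `M(Y) - T` into linear factors may be checked after an injective map. -/
theorem factor_lift {B : Type*} [CommRing B] {incl : B →+* Ω} (hincl : Function.Injective incl)
    {g : K[X] →+* B} {Y : ι → B}
    (hy : M.map ((incl.comp g).comp C) - C (incl (g X)) = ∏ i, (X - C (incl (Y i)))) :
    M.map (g.comp C) - C (g X) = ∏ i, (X - C (Y i)) := by
  apply Polynomial.map_injective incl hincl
  rw [Polynomial.map_sub, Polynomial.map_map, map_C, Polynomial.map_prod]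
  simpa [RingHom.comp_assoc] using hy

/-- A factorization of `M(Y) - T` specializes along `T ↦ t`. -/
theorem factor_specialize {B : Type*} [CommRing B] {g : K[X] →+* B} {Y : ι → B}
    (hY : M.map (g.comp C) - C (g X) = ∏ i, (X - C (Y i))) {ψ : B →+* K} {t : K}
    (hψ : ∀ p : K[X], ψ (g p) = p.eval t) : M - C t = ∏ i, (X - C (ψ (Y i))) := by
  have := congrArg (Polynomial.map ψ) hY
  rw [Polynomial.map_sub, Polynomial.map_map, map_C, Polynomial.map_prod, hψ, eval_X] at this
  have h : ψ.comp (g.comp C) = RingHom.id K := by ext a; simp [hψ]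
  rw [h, Polynomial.map_id] at this
  simpa using this

/-- A nontrivial inertia element above a critical value `M(β)` is a transposition of the roots: it
can only move roots that specialize to `β`, and exactly two of them do. -/
theorem exists_swap_galois [IsAlgClosed K] {F L : Type*} [Field F] [Algebra K[X] F]
    [IsFractionRing K[X] F] [Field L] [Algebra F L] [Algebra K[X] L] [IsScalarTower K[X] F L]
    [FiniteDimensional F L] [IsGalois F L] [DecidableEq ι] {n : ℕ} (hn2 : 2 ≤ n)
    (hn : (n : K) ≠ 0) (hM : M.Monic) (hdeg : M.natDegree = n)
    (hsimple : ∀ β, (derivative M).eval β = 0 → (derivative (derivative M)).eval β ≠ 0)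
    (hval : ∀ β β', (derivative M).eval β = 0 → (derivative M).eval β' = 0 →
      M.eval β = M.eval β' → β = β') {y : ι → L}
    (hy : M.map ((algebraMap K[X] L).comp C) - C (algebraMap K[X] L X) = ∏ i, (X - C (y i)))
    (hgen : ∀ σ : L ≃ₐ[F] L, (∀ i, σ (y i) = y i) → σ = 1) :
    ∃ i j, i ≠ j ∧ ∃ σ : L ≃ₐ[F] L, ∀ l, σ (y l) = y (Equiv.swap i j l) := by
  have hfaith : FaithfulSMul K[X] L := FaithfulSMul.trans K[X] F L
  have hinj : Function.Injective (algebraMap K[X] L) := FaithfulSMul.algebraMap_injective _ _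
  have hM' := derivative_ne_zero_of_cast hn2 hn hM hdeg
  have hyinj := injective_roots hinj hM' hy
  have hyint : ∀ i, IsIntegral K[X] (y i) := by
    intro i
    refine ⟨M.map C - C X, ?_, ?_⟩
    · apply Monic.sub_of_left (hM.map C)
      rw [degree_map_eq_of_injective C_injective, degree_eq_natDegree hM.ne_zero]
      exact degree_C_le.trans_lt (by exact_mod_cast (by omega : 0 < M.natDegree))
    · rw [eval₂_sub, eval₂_map, eval₂_C, root_of_prod hy, sub_self]
  let Y : ι → integralClosure K[X] L := fun i => ⟨y i, hyint i⟩
  have hY : M.map ((algebraMap K[X] (integralClosure K[X] L)).comp C)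
      - C (algebraMap K[X] (integralClosure K[X] L) X) = ∏ i, (X - C (Y i)) :=
    factor_lift (incl := algebraMap (integralClosure K[X] L) L) Subtype.val_injective hy
  obtain ⟨β, hβ⟩ : ∃ β, (derivative M).eval β = 0 := by
    refine IsAlgClosed.exists_root _ fun h => ?_
    have h1 : (derivative M).natDegree = 0 := natDegree_eq_of_degree_eq_some h
    have h2 : coeff (derivative M) (n - 1) = n := by
      have h1 : n - 1 + 1 = n := by omega
      have h2 : ((n - 1 : ℕ) : K) + 1 = n := by exact_mod_cast congrArg (Nat.cast (R := K)) h1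
      rw [coeff_derivative, h1, h2, ← hdeg, hM.coeff_natDegree, one_mul]
    have := le_natDegree_of_ne_zero (h2 ▸ hn)
    omega
  obtain ⟨ψ, hψ⟩ := exists_specialization (B := integralClosure K[X] L) (M.eval β)
  have hz := factor_specialize hY hψ
  set z : ι → K := fun i => ψ (Y i) with hzdef
  obtain ⟨i₀, hi₀⟩ : ∃ i, z i = β := by
    have := congrArg (eval β) hz
    rw [eval_sub, eval_C, sub_self, eval_prod, eq_comm, Finset.prod_eq_zero_iff] at this
    obtain ⟨i, -, hi⟩ := this
    exact ⟨i, by rw [eval_sub, eval_X, eval_C, sub_eq_zero] at hi; exact hi.symm⟩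
  have hcoll : ∀ i j, i ≠ j → z i = z j → z i = β := by
    intro i j hij h
    refine hval _ _ ?_ hβ ?_
    · have := derivative_prod_eval_eq_zero (y := z) hij h
      rwa [← hz, derivative_sub, derivative_C, sub_zero] at this
    · have := congrArg (eval (z i)) hz
      rwa [eval_prod, Finset.prod_eq_zero (Finset.mem_univ i) (by simp [hzdef]), eval_sub, eval_C,
        sub_eq_zero] at this
  have htriple : ∀ i j l, z i = β → z j = β → z l = β → i ≠ j → i ≠ l → j ≠ l → False := by
    intro i j l hi hj hl h1 h2 h3
    have := derivative_derivative_prod_eval_eq_zero (y := z) h1 h2 h3 (by rw [hi, hj])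
      (by rw [hi, hl])
    rw [← hz, derivative_sub, derivative_C, sub_zero, hi] at this
    exact hsimple β hβ this
  have hram : algebraMap K[X] (integralClosure K[X] L) (X - C (M.eval β)) ∈ (RingHom.ker ψ) ^ 2 := by
    obtain ⟨N, hN⟩ : (X - C β) ^ 2 ∣ M - C (M.eval β) := by
      obtain ⟨N, hN⟩ := dvd_iff_isRoot.mpr (show IsRoot (M - C (M.eval β)) β by simp)
      have hN' : IsRoot N β := by
        have := congrArg (fun p => eval β (derivative p)) hN
        simpa [derivative_mul, hβ, eq_comm] using this
      obtain ⟨N', hN'⟩ := dvd_iff_isRoot.mpr hN'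
      exact ⟨N', by rw [hN, hN']; ring⟩
    set κ := (algebraMap K[X] (integralClosure K[X] L)).comp C with hκ
    have h1 := congrArg (eval₂ κ (Y i₀)) hN
    have h2 : M.eval₂ κ (Y i₀) = algebraMap K[X] (integralClosure K[X] L) X := by
      have := congrArg (eval (Y i₀)) hY
      rwa [eval_sub, eval_map, eval_C, eval_prod,
        Finset.prod_eq_zero (Finset.mem_univ i₀) (by simp), sub_eq_zero] at this
    rw [eval₂_sub, h2, eval₂_C, eval₂_mul, eval₂_pow, eval₂_sub, eval₂_X, eval₂_C] at h1
    rw [map_sub]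
    change _ - κ _ ∈ _
    rw [h1]
    refine Ideal.mul_mem_right _ _ (Ideal.pow_mem_pow ?_ 2)
    rw [RingHom.mem_ker, map_sub, sub_eq_zero]
    change z i₀ = ψ (algebraMap K[X] _ (C β))
    rw [hψ, eval_C, hi₀]
  obtain ⟨σ, hσ1, hσ⟩ := exists_inertia (F := F) ψ hψ hram
  have hσy : ∀ i, ∃ j, σ (y i) = y j := by
    intro i
    apply exists_index_of_root hy
    have h := congrArg σ (root_of_prod hy i)
    have hfix : ∀ p : K[X], σ (algebraMap K[X] L p) = algebraMap K[X] L p := by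
      intro p
      rw [IsScalarTower.algebraMap_apply K[X] F L, σ.commutes]
    rw [hfix] at h
    rw [← h]
    change _ = (σ : L →+* L) _
    rw [hom_eval₂]
    congr 1
    ext a
    simp [hfix]
  have hσz : ∀ i j, σ (y i) = y j → z j = z i := fun i j h => hσ (Y i) (Y j) h
  obtain ⟨i, hi⟩ : ∃ i, σ (y i) ≠ y i := by
    by_contra! h
    exact hσ1 (hgen σ h)
  obtain ⟨j, hj⟩ := hσy i
  have hij : i ≠ j := by rintro rfl; exact hi hj
  have hzi : z i = β := hcoll i j hij (hσz i j hj).symm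
  have hzj : z j = β := by rw [hσz i j hj, hzi]
  refine ⟨i, j, hij, σ, fun l => ?_⟩
  obtain ⟨m, hm⟩ := hσy l
  have hzm := hσz l m hm
  by_cases hli : l = i
  · rw [hli, Equiv.swap_apply_left, hj]
  have hmj : m ≠ j := by
    rintro rfl
    exact hli (hyinj (σ.injective (hm.trans hj.symm)))
  by_cases hlj : l = j
  · rw [hlj, Equiv.swap_apply_right]
    rw [hlj] at hm hzm
    rw [hm]
    congr 1
    by_contra hmi
    exact htriple i j m hzi hzj (by rw [hzm, hzj]) hij (Ne.symm hmi) (Ne.symm hmj)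
  · rw [Equiv.swap_apply_of_ne_of_ne hli hlj, hm]
    congr 1
    by_contra hml
    exact htriple i j l hzi hzj (hcoll l m (Ne.symm hml) hzm.symm) hij (Ne.symm hli) (Ne.symm hlj)

attribute [local instance] FractionRing.liftAlgebra in
/-- The transposition of `exists_swap_galois`, for the splitting field of `M(Y) - T` in `Ω`,
extended to an automorphism of `Ω`. -/
theorem exists_swap_monodromy [IsAlgClosed K] [IsAlgClosed Ω] [DecidableEq ι]
    (hf : Function.Injective f) (haf : ∀ z : Ω, ∃ p : K[X][X], p ≠ 0 ∧ p.eval₂ f z = 0)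
    {n : ℕ} (hn2 : 2 ≤ n)
    (hn : (n : K) ≠ 0) (hM : M.Monic) (hdeg : M.natDegree = n)
    (hsimple : ∀ β, (derivative M).eval β = 0 → (derivative (derivative M)).eval β ≠ 0)
    (hval : ∀ β β', (derivative M).eval β = 0 → (derivative M).eval β' = 0 →
      M.eval β = M.eval β' → β = β')
    (hy : M.map (f.comp C) - C (f X) = ∏ i, (X - C (y i))) :
    ∃ i j, i ≠ j ∧ ∃ τ : Ω ≃+* Ω, (∀ a, τ (f a) = f a) ∧
      ∀ l, τ (y l) = y (Equiv.swap i j l) := by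
  let := f.toAlgebra
  have : FaithfulSMul K[X] Ω := (faithfulSMul_iff_algebraMap_injective K[X] Ω).mpr hf
  have hal : Algebra.IsAlgebraic K[X] Ω := ⟨haf⟩
  let F := FractionRing K[X]
  have : Algebra.IsAlgebraic F Ω :=
    ⟨fun z => (hal.isAlgebraic z).extendScalars (IsFractionRing.injective K[X] _)⟩
  have : Normal F Ω :=
    normal_iff.mpr fun z => ⟨Algebra.IsIntegral.isIntegral z, IsAlgClosed.splits _⟩
  have hM' := derivative_ne_zero_of_cast hn2 hn hM hdeg
  have hyinj := injective_roots hf hM' hy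
  let p : F[X] := (M.map C - C X : K[X][X]).map (algebraMap K[X] F)
  have hp : p.map (algebraMap F Ω) = ∏ i, (X - C (y i)) := by
    rw [← hy, Polynomial.map_map, ← IsScalarTower.algebraMap_eq, Polynomial.map_sub,
      Polynomial.map_map, map_C]
    rfl
  have hp0 : p ≠ 0 := by
    rintro h
    rw [h, Polynomial.map_zero] at hp
    exact (monic_prod_X_sub_C y Finset.univ).ne_zero hp.symm
  have hsep : p.Separable := by
    rw [← separable_map (algebraMap F Ω), hp, separable_prod_X_sub_C_iff]
    exact hyinj
  have hroots : p.rootSet Ω = Set.range y := by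
    ext z
    rw [mem_rootSet_of_ne hp0, ← eval_map_algebraMap, hp, eval_prod, Finset.prod_eq_zero_iff]
    simp [sub_eq_zero, eq_comm]
  let L := IntermediateField.adjoin F (p.rootSet Ω)
  have hspl : IsSplittingField F L p :=
    IntermediateField.adjoin_rootSet_isSplittingField (IsAlgClosed.splits _)
  have : IsGalois F L := IsGalois.of_separable_splitting_field hsep
  have : FiniteDimensional F L := IsSplittingField.finiteDimensional L p
  have hyL : ∀ i, y i ∈ L := fun i =>
    IntermediateField.subset_adjoin _ _ (by rw [hroots]; exact ⟨i, rfl⟩)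
  have hy' : M.map ((algebraMap K[X] L).comp C) - C (algebraMap K[X] L X)
      = ∏ i, (X - C (⟨y i, hyL i⟩ : L)) :=
    factor_lift (incl := algebraMap L Ω) (Y := fun i => (⟨y i, hyL i⟩ : L))
      (algebraMap L Ω).injective (by exact hy)
  obtain ⟨i, j, hij, σ, hσ⟩ := exists_swap_galois (F := F) hn2 hn hM hdeg hsimple hval hy' (by
    intro σ h
    have : (σ : L →ₐ[F] L) = AlgHom.id F L := by
      apply IntermediateField.algHom_ext_of_eq_adjoin F (S := L) rfl
      intro x hx
      obtain ⟨i, rfl⟩ := hroots ▸ hx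
      exact h i
    ext x
    exact congrArg (algebraMap L Ω) (DFunLike.congr_fun this x))
  refine ⟨i, j, hij, (σ.liftNormal Ω).toRingEquiv, fun a => ?_, fun l => ?_⟩
  · have := (σ.liftNormal Ω).commutes (algebraMap K[X] F a)
    rwa [← IsScalarTower.algebraMap_apply] at this
  · have := σ.liftNormal_commutes Ω ⟨y l, hyL l⟩
    rw [hσ] at this
    exact this
end

/-! ### The monodromy group is the full symmetric group -/

section
variable {K : Type*} [Field K]
variable {Ω : Type*} [Field Ω] {f : K[X] →+* Ω} {M : K[X]} {ι : Type*} [Fintype ι]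
  {y : ι → Ω}

/-- The group of permutations of the family `y` induced by the automorphisms of `Ω` that fix the
image of `f`. For `y` the roots of `M(Y) - T` it is the geometric monodromy group of `M`. -/
def monodromy (f : K[X] →+* Ω) (y : ι → Ω) : Subgroup (Equiv.Perm ι) where
  carrier := {π | ∃ τ : Ω ≃+* Ω, (∀ a, τ (f a) = f a) ∧ ∀ i, τ (y i) = y (π i)}
  one_mem' := ⟨RingEquiv.refl Ω, fun _ => rfl, fun _ => rfl⟩
  mul_mem' := by
    rintro π ρ ⟨τ, h1, h2⟩ ⟨υ, h3, h4⟩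
    exact ⟨υ.trans τ, fun a => by simp [h1, h3], fun i => by simp [h2, h4]⟩
  inv_mem' := by
    rintro π ⟨τ, h1, h2⟩
    refine ⟨τ.symm, fun a => ?_, fun i => ?_⟩
    · rw [RingEquiv.symm_apply_eq, h1]
    · rw [RingEquiv.symm_apply_eq, h2]; simp

theorem exists_perm_of_ringEquiv {y : ι → Ω} (hy : Function.Injective y) (τ : Ω ≃+* Ω)
    (h : ∀ i, ∃ j, τ (y i) = y j) : ∃ π : Equiv.Perm ι, ∀ i, τ (y i) = y (π i) := by
  choose π hπ using h
  have : Function.Injective π := by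
    intro i j hij
    exact hy (τ.injective (by rw [hπ, hπ, hij]))
  exact ⟨Equiv.ofBijective π (Finite.injective_iff_bijective.mp this), hπ⟩

theorem apply_root (hy : M.map (f.comp C) - C (f X) = ∏ i, (X - C (y i))) {τ : Ω ≃+* Ω}
    (hτ : ∀ a, τ (f a) = f a) (i : ι) : ∃ j, τ (y i) = y j := by
  apply exists_index_of_root hy
  have h := congrArg τ (root_of_prod hy i)
  rw [hτ] at h
  rw [← h]
  change _ = (τ : Ω →+* Ω) _
  rw [hom_eval₂]
  congr 1
  ext a
  simp [hτ]

theorem monodromy_eq_top [IsAlgClosed K] [IsAlgClosed Ω]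
    (hf : Function.Injective f) (haf : ∀ z : Ω, ∃ p : K[X][X], p ≠ 0 ∧ p.eval₂ f z = 0)
    {n : ℕ} (hn2 : 2 ≤ n)
    (hn : (n : K) ≠ 0) (hM : M.Monic) (hdeg : M.natDegree = n)
    (hsimple : ∀ β, (derivative M).eval β = 0 → (derivative (derivative M)).eval β ≠ 0)
    (hval : ∀ β β', (derivative M).eval β = 0 → (derivative M).eval β' = 0 →
      M.eval β = M.eval β' → β = β')
    (hy : M.map (f.comp C) - C (f X) = ∏ i, (X - C (y i))) : monodromy f y = ⊤ := by
  classical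
  have hyinj := injective_roots hf (derivative_ne_zero_of_cast hn2 hn hM hdeg) hy
  have hr := root_of_prod hy
  have htrans : ∀ i j a b, i ≠ j → a ≠ b → ∃ π ∈ monodromy f y, π i = a ∧ π j = b := by
    intro i j a b hij hab
    obtain ⟨τ, hτ, hτi⟩ := trans_one hf (by omega) haf (hr i) (hr a)
    obtain ⟨π, hπ⟩ := exists_perm_of_ringEquiv hyinj τ (apply_root hy hτ)
    have hπi : π i = a := hyinj (by rw [← hπ, hτi])
    have hπj : y (π j) ≠ y a := by
      intro h
      rw [← hπi] at h
      exact hij (π.injective (hyinj h)).symm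
    obtain ⟨υ, hυ, hυa, hυb⟩ := trans_two hf hn2 hn hM hdeg hsimple hval haf (hr a) (hr (π j)) (hr b)
      hπj (fun h => hab (hyinj h).symm)
    obtain ⟨ρ, hρ⟩ := exists_perm_of_ringEquiv hyinj υ (apply_root hy hυ)
    refine ⟨ρ * π, mul_mem ⟨υ, hυ, hρ⟩ ⟨τ, hτ, hπ⟩, ?_, ?_⟩
    · apply hyinj
      rw [Equiv.Perm.mul_apply, hπi, ← hρ, hυa]
    · apply hyinj
      rw [Equiv.Perm.mul_apply, ← hρ, hυb]
  obtain ⟨i, j, hij, hsw⟩ := exists_swap_monodromy hf haf hn2 hn hM hdeg hsimple hval hy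
  have hsw : Equiv.swap i j ∈ monodromy f y := hsw
  rw [eq_top_iff, ← Equiv.Perm.closure_isSwap, Subgroup.closure_le]
  rintro _ ⟨a, b, hab, rfl⟩
  obtain ⟨π, hπ, rfl, rfl⟩ := htrans i j a b hij hab
  rw [Equiv.swap_apply_apply]
  exact mul_mem (mul_mem hπ hsw) (inv_mem hπ)

theorem exists_ringEquiv_perm [IsAlgClosed K] [IsAlgClosed Ω]
    (hf : Function.Injective f) (haf : ∀ z : Ω, ∃ p : K[X][X], p ≠ 0 ∧ p.eval₂ f z = 0)
    {n : ℕ} (hn2 : 2 ≤ n)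
    (hn : (n : K) ≠ 0) (hM : M.Monic) (hdeg : M.natDegree = n)
    (hsimple : ∀ β, (derivative M).eval β = 0 → (derivative (derivative M)).eval β ≠ 0)
    (hval : ∀ β β', (derivative M).eval β = 0 → (derivative M).eval β' = 0 →
      M.eval β = M.eval β' → β = β')
    (hy : M.map (f.comp C) - C (f X) = ∏ i, (X - C (y i))) (π : Equiv.Perm ι) :
    ∃ τ : Ω ≃+* Ω, (∀ a, τ (f a) = f a) ∧ ∀ i, τ (y i) = y (π i) := by
  have : π ∈ monodromy f y := by
    rw [monodromy_eq_top hf haf hn2 hn hM hdeg hsimple hval hy]; trivial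
  exact this
end

/-! ### The twisted resolvent -/

section

theorem apply_of_map_eq_prod {Ω ι : Type*} [Field Ω] [Fintype ι] {y : ι → Ω} {p : Polynomial Ω}
    (hp : p = ∏ i, (X - C (y i))) {τ : Ω ≃+* Ω} (hτ : p.map (τ : Ω →+* Ω) = p) (i : ι) :
    ∃ j, τ (y i) = y j := by
  have h : p.eval (τ (y i)) = 0 := by
    rw [← hτ, ← RingEquiv.coe_toRingHom, eval_map_apply, hp, eval_prod,
      Finset.prod_eq_zero (Finset.mem_univ i) (by simp), map_zero]
  rw [hp, eval_prod, Finset.prod_eq_zero_iff] at h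
  obtain ⟨j, -, hj⟩ := h
  exact ⟨j, by simpa [sub_eq_zero] using hj⟩

theorem eval₂_apply_eq_zero {A Ω : Type*} [CommRing A] [Field Ω] (h : A →+* Ω) (q : A[X])
    (τ : Ω ≃+* Ω) (hτ : ∀ x, τ (h x) = h x) {z : Ω} (h0 : q.eval₂ h z = 0) :
    q.eval₂ h (τ z) = 0 := by
  have h1 := congrArg (τ : Ω →+* Ω) h0
  rw [hom_eval₂, map_zero] at h1
  rwa [show (τ : Ω →+* Ω).comp h = h from RingHom.ext hτ] at h1

theorem isSeparable_of_map_eq_prod {F Ω ι : Type*} [Field F] [Field Ω] [Algebra F Ω] [Fintype ι]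
    {y : ι → Ω} (hy : Function.Injective y) {p : F[X]}
    (hp : p.map (algebraMap F Ω) = ∏ i, (X - C (y i))) (i : ι) : IsSeparable F (y i) := by
  have hsep : p.Separable := by
    rwa [← separable_map (algebraMap F Ω), hp, separable_prod_X_sub_C_iff]
  refine hsep.of_dvd (minpoly.dvd F _ ?_)
  rw [← eval_map_algebraMap, hp, eval_prod, Finset.prod_eq_zero (Finset.mem_univ i) (by simp)]

/-- If all permutations of the `y i` come from automorphisms, the resolvents are pairwise distinct.
Equality for `σ` and `ρ` is a linear relation `∑ i, c i * y i = 0` with `c i = a (σ i) - a (ρ i)`,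
stable under all permutations of the `y i`. Comparing it with its image under a transposition shows
that `c` is constant; since `∑ i, c i = 0` and `n ≠ 0` in `K`, it vanishes. -/
theorem resolvent_injective {K Ω ι : Type*} [Field K] [Field Ω] [Fintype ι] [DecidableEq ι]
    {f : K[X] →+* Ω} {y : ι → Ω} {a : ι → K} (hy : Function.Injective y)
    (ha : Function.Injective a) (hn : (Fintype.card ι : K) ≠ 0)
    (hS : ∀ π : Equiv.Perm ι, ∃ τ : Ω ≃+* Ω, (∀ p, τ (f p) = f p) ∧ ∀ i, τ (y i) = y (π i)) :
    Function.Injective (fun σ : Equiv.Perm ι => ∑ i, f (C (a (σ i))) * y i) := by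
  intro σ ρ h
  set c : ι → K := fun i => a (σ i) - a (ρ i) with hc
  have h0 : ∑ i, f (C (c i)) * y i = 0 := by
    have := sub_eq_zero.mpr h
    simp only [← Finset.sum_sub_distrib, ← sub_mul, ← map_sub] at this
    exact this
  have hπ : ∀ π : Equiv.Perm ι, ∑ i, f (C (c i)) * y (π i) = 0 := by
    intro π
    obtain ⟨τ, hτ, hτy⟩ := hS π
    have := congrArg τ h0
    simpa [map_sum, hτ, hτy] using this
  have heq : ∀ i j, c i = c j := by
    intro i j
    by_cases hij : i = j
    · rw [hij]
    have h1 : ∑ l, f (C (c l)) * (y l - y (Equiv.swap i j l)) = 0 := by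
      simp only [mul_sub, Finset.sum_sub_distrib, h0, hπ, sub_self]
    rw [Finset.sum_eq_add_of_mem i j (Finset.mem_univ _) (Finset.mem_univ _) hij] at h1
    · rw [Equiv.swap_apply_left, Equiv.swap_apply_right] at h1
      have h2 : (f (C (c i)) - f (C (c j))) * (y i - y j) = 0 := by linear_combination h1
      rcases mul_eq_zero.mp h2 with h3 | h3
      · exact (f.comp C).injective (sub_eq_zero.mp h3)
      · exact absurd (hy (sub_eq_zero.mp h3)) hij
    · intro l _ hl
      rw [Equiv.swap_apply_of_ne_of_ne hl.1 hl.2, sub_self, mul_zero]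
  have hsum : ∑ i, c i = 0 := by
    rw [hc, Finset.sum_sub_distrib, Equiv.sum_comp σ a, Equiv.sum_comp ρ a, sub_self]
  ext1 i
  have : (Fintype.card ι : K) * c i = 0 := by
    rw [← hsum, Finset.sum_congr rfl (fun j _ => heq j i)]
    simp
  exact ha (sub_eq_zero.mp ((mul_eq_zero.mp this).resolve_left hn))

attribute [local instance] Polynomial.algebra in
/-- Elements algebraic over `K[T]` are algebraic over `k[T]` when `K / k` is algebraic. -/
theorem algebraic_over_base {k K Ω : Type*} [Field k] [Field K] [Algebra k K]
    [Algebra.IsAlgebraic k K] [Field Ω] {f : K[X] →+* Ω}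
    (haf : ∀ z : Ω, ∃ p : K[X][X], p ≠ 0 ∧ p.eval₂ f z = 0) (z : Ω) :
    ∃ p : k[X][X], p ≠ 0 ∧ p.eval₂ (f.comp (mapRingHom (algebraMap k K))) z = 0 := by
  let := f.toAlgebra
  let := (f.comp (mapRingHom (algebraMap k K))).toAlgebra
  have : IsScalarTower k[X] K[X] Ω := IsScalarTower.of_algebraMap_eq fun _ => rfl
  have h1 : Algebra.IsAlgebraic K[X] Ω := ⟨haf⟩
  have h2 : Algebra.IsAlgebraic k[X] K[X] := inferInstance
  exact (Algebra.IsAlgebraic.trans k[X] K[X] Ω).isAlgebraic z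

attribute [local instance] FractionRing.liftAlgebra in
/-- The minimal polynomial `R` over `k[T]` of the resolvent `∑ i, a i * y i` has the
`∑ i, a (σ i) * y i` as its simple roots, and is irreducible over the extension `K` of `k`. Each
conjugate over `k(T)` is such a sum because automorphisms permute the `a i` and the `y i`; each such
sum is already a conjugate over `K(T)` because the monodromy is the full symmetric group. -/
theorem exists_resolvent {k K Ω ι : Type*} [Field k] [Field K] [Algebra k K]
    [Algebra.IsAlgebraic k K] [Field Ω] [IsAlgClosed Ω] [Fintype ι] [DecidableEq ι]
    {f : K[X] →+* Ω} (hf : Function.Injective f)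
    (haf : ∀ z : Ω, ∃ p : K[X][X], p ≠ 0 ∧ p.eval₂ f z = 0)
    {y : ι → Ω} {a : ι → K} (hyinj : Function.Injective y) (hainj : Function.Injective a)
    {M g : k[X]} (hM : M.Monic) (hdeg : 0 < M.natDegree)
    (hy : (M.map (algebraMap k K)).map (f.comp C) - C (f X) = ∏ i, (X - C (y i)))
    (ha : g.map (algebraMap k K) = ∏ i, (X - C (a i)))
    (hS : ∀ π : Equiv.Perm ι, ∃ τ : Ω ≃+* Ω, (∀ p, τ (f p) = f p) ∧ ∀ i, τ (y i) = y (π i))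
    (hinj : Function.Injective (fun σ : Equiv.Perm ι => ∑ i, f (C (a (σ i))) * y i)) :
    ∃ R : k[X][X], R.Monic ∧
      (R.map (mapRingHom (algebraMap k K))).map f =
        ∏ σ : Equiv.Perm ι, (X - C (∑ i, f (C (a (σ i))) * y i)) ∧
      Irreducible (R.map (mapRingHom (algebraMap k K))) := by
  set θ : Equiv.Perm ι → Ω := fun σ => ∑ i, f (C (a (σ i))) * y i with hθ
  set f₀ : k[X] →+* Ω := f.comp (mapRingHom (algebraMap k K)) with hf₀
  have hf₀inj : Function.Injective f₀ :=
    hf.comp (map_injective _ (algebraMap k K).injective)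
  have haf₀ := algebraic_over_base (k := k) haf
  have hy₀ : M.map (f₀.comp C) - C (f₀ X) = ∏ i, (X - C (y i)) := by
    rw [← hy, Polynomial.map_map]
    congr 2
    · ext; simp [hf₀]
    · simp [hf₀]
  have ha₀ : g.map (f₀.comp C) = ∏ i, (X - C (f (C (a i)))) := by
    have := congrArg (Polynomial.map (f.comp C)) ha
    rw [Polynomial.map_map, Polynomial.map_prod] at this
    have h : f₀.comp C = (f.comp C).comp (algebraMap k K) := by ext; simp [hf₀]
    rw [h, this]
    simp
  have hbinj : Function.Injective (fun i => f (C (a i))) := (f.comp C).injective.comp hainj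
  let := f₀.toAlgebra
  have : FaithfulSMul k[X] Ω := (faithfulSMul_iff_algebraMap_injective k[X] Ω).mpr hf₀inj
  have hsepθ : IsSeparable (FractionRing k[X]) (θ 1) := by
    rw [← mem_separableClosure_iff]
    refine sum_mem fun i _ => mul_mem ?_ ?_ <;> rw [mem_separableClosure_iff]
    · refine isSeparable_of_map_eq_prod (p := (g.map C).map (algebraMap k[X] (FractionRing k[X])))
        hbinj ?_ i
      rw [Polynomial.map_map, ← IsScalarTower.algebraMap_eq, ← ha₀, Polynomial.map_map]; rfl
    · refine isSeparable_of_map_eq_prod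
        (p := (M.map C - C X : k[X][X]).map (algebraMap k[X] (FractionRing k[X]))) hyinj ?_ i
      rw [Polynomial.map_map, ← IsScalarTower.algebraMap_eq, ← hy₀, Polynomial.map_sub,
        Polynomial.map_map, map_C]; rfl
  have hmon : (M.map C - C X : k[X][X]).Monic := by
    apply Monic.sub_of_left (hM.map C)
    rw [degree_map_eq_of_injective C_injective, degree_eq_natDegree hM.ne_zero]
    exact degree_C_le.trans_lt (by exact_mod_cast hdeg)
  have hgmon : g.Monic := by
    have := monic_prod_X_sub_C a Finset.univ
    rw [← ha] at this
    exact monic_of_injective (algebraMap k K).injective this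
  have hInteg : IsIntegral k[X] (θ 1) := by
    refine IsIntegral.sum _ fun i _ => IsIntegral.mul ?_ ?_
    · refine ⟨g.map C, hgmon.map C, ?_⟩
      change eval₂ f₀ _ _ = 0
      rw [eval₂_map, ← eval_map, ha₀, eval_prod, Finset.prod_eq_zero (Finset.mem_univ i) (by simp)]
    · refine ⟨M.map C - C X, hmon, ?_⟩
      change eval₂ f₀ _ _ = 0
      rw [eval₂_sub, eval₂_map, eval₂_C, root_of_prod hy₀, sub_self]
  set R := minpoly k[X] (θ 1) with hR
  have hRm : R.Monic := minpoly.monic hInteg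
  have hRi : Irreducible R := minpoly.irreducible hInteg
  have hR0 : R.eval₂ f₀ (θ 1) = 0 := minpoly.aeval k[X] (θ 1)
  have hRsep : (R.map f₀).Separable := by
    have h : (minpoly (FractionRing k[X]) (θ 1)).Separable := hsepθ
    rw [minpoly.isIntegrallyClosed_eq_field_fractions' (FractionRing k[X]) hInteg] at h
    have := h.map (f := algebraMap (FractionRing k[X]) Ω)
    rw [Polynomial.map_map, ← IsScalarTower.algebraMap_eq] at this
    exact this
  have hconj : ∀ σ, ∃ τ : Ω ≃+* Ω, (∀ p, τ (f p) = f p) ∧ τ (θ 1) = θ σ := by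
    intro σ
    obtain ⟨τ, hτ, hτy⟩ := hS σ⁻¹
    refine ⟨τ, hτ, ?_⟩
    simp only [hθ, map_sum, map_mul, hτ, hτy, Equiv.Perm.one_apply]
    rw [← Equiv.sum_comp σ]
    simp
  have hroots : ∀ z, (R.map f₀).IsRoot z ↔ ∃ σ, θ σ = z := by
    intro z
    rw [IsRoot, eval_map]
    constructor
    · intro hz
      obtain ⟨τ, hτ, rfl⟩ := exists_ringEquiv_of_root f₀ hf₀inj haf₀ hRm hRi hR0 hz
      obtain ⟨π, hπ⟩ := exists_perm_of_ringEquiv hyinj τ (apply_root hy₀ hτ)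
      obtain ⟨ρ, hρ⟩ := exists_perm_of_ringEquiv hbinj τ (apply_of_map_eq_prod ha₀ (by
        rw [Polynomial.map_map]
        congr 1
        ext x
        simp [hτ]))
      refine ⟨ρ * π⁻¹, ?_⟩
      simp only [hθ, map_sum, map_mul, hπ, hρ, Equiv.Perm.one_apply]
      rw [← Equiv.sum_comp π]
      simp
    · rintro ⟨σ, rfl⟩
      obtain ⟨τ, hτ, h1⟩ := hconj σ
      rw [← h1]
      exact eval₂_apply_eq_zero f₀ R τ (fun x => hτ _) hR0
  have hRprod : R.map f₀ = ∏ σ, (X - C (θ σ)) := by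
    have h1 := (IsAlgClosed.splits (R.map f₀)).eq_prod_roots_of_monic (hRm.map _)
    have h2 : (R.map f₀).roots = (Finset.univ.val.map θ) := by
      refine (Multiset.Nodup.ext (nodup_roots hRsep) (Finset.univ.nodup.map hinj)).mpr fun z => ?_
      rw [mem_roots (hRm.map _).ne_zero, hroots]
      simp
    rw [h2, Multiset.map_map] at h1
    exact h1
  have hRK : (R.map (mapRingHom (algebraMap k K))).map f = ∏ σ, (X - C (θ σ)) := by
    rw [Polynomial.map_map]; exact hRprod
  refine ⟨R, hRm, hRK, ?_⟩
  -- the minimal polynomial over `K[X]` already has all `θ σ` as roots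
  let := f.toAlgebra
  have : FaithfulSMul K[X] Ω := (faithfulSMul_iff_algebraMap_injective K[X] Ω).mpr hf
  have hRK0 : (R.map (mapRingHom (algebraMap k K))).eval₂ f (θ 1) = 0 := by
    rw [eval₂_map]; exact hR0
  have hintK : IsIntegral K[X] (θ 1) := ⟨_, hRm.map _, hRK0⟩
  have hdvd := minpoly.isIntegrallyClosed_dvd hintK hRK0
  have hqm := minpoly.monic hintK
  have hle : (R.map (mapRingHom (algebraMap k K))).natDegree ≤ (minpoly K[X] (θ 1)).natDegree := by
    rw [← (hRm.map (mapRingHom (algebraMap k K))).natDegree_map f, ← hqm.natDegree_map f, hRK]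
    refine natDegree_le_of_dvd ?_ (hqm.map f).ne_zero
    refine Finset.prod_dvd_of_coprime (fun σ _ ρ _ h => ?_) fun σ _ => ?_
    · exact pairwise_coprime_X_sub_C hinj h
    · rw [dvd_iff_isRoot, IsRoot, eval_map]
      obtain ⟨τ, hτ, h1⟩ := hconj σ
      rw [← h1]
      exact eval₂_apply_eq_zero f _ τ hτ (minpoly.aeval K[X] (θ 1))
  rw [eq_of_monic_of_dvd_of_natDegree_le hqm (hRm.map _) hdvd hle]
  exact minpoly.irreducible hintK
end

/-! ### Specialization at a rational point -/

section

theorem map_eq_of_algEquiv {k K : Type*} [Field k] [Field K] [Algebra k K] {τ : K ≃+* K}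
    (hτ : ∀ x : k, τ (algebraMap k K x) = algebraMap k K x) (g : k[X]) :
    (g.map (algebraMap k K)).map (τ : K →+* K) = g.map (algebraMap k K) := by
  rw [Polynomial.map_map]
  congr 1
  ext x
  exact hτ x

open IntermediateField in
/-- If `∑ i, a i * y i` lies in `k` and its permuted versions are distinct, then an automorphism over
`k` permutes the `a i` and the `y i` in the same way. One fixing `a i` therefore fixes `y i`. -/
theorem mem_adjoin_of_resolvent {k K ι : Type*} [Field k] [Field K] [IsAlgClosed K] [Algebra k K]
    [Algebra.IsAlgebraic k K] [Fintype ι] {a y : ι → K} {g h : k[X]}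
    (ha : g.map (algebraMap k K) = ∏ i, (X - C (a i)))
    (hy : h.map (algebraMap k K) = ∏ i, (X - C (y i)))
    (hainj : Function.Injective a) (hyinj : Function.Injective y)
    (hinj : Function.Injective (fun σ : Equiv.Perm ι => ∑ i, a (σ i) * y i))
    (hz : ∃ z : k, algebraMap k K z = ∑ i, a i * y i) (i : ι) : y i ∈ k⟮a i⟯ := by
  by_contra hmem
  have hsep : IsSeparable k⟮a i⟯ (y i) :=
    isSeparable_of_map_eq_prod hyinj (p := h.map (algebraMap k k⟮a i⟯))
      (by rw [Polynomial.map_map, ← IsScalarTower.algebraMap_eq, hy]) i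
  have : Algebra.IsAlgebraic k⟮a i⟯ K := Algebra.IsAlgebraic.tower_top (K := k) _
  have : Normal k⟮a i⟯ K :=
    normal_iff.mpr fun z => ⟨Algebra.IsIntegral.isIntegral z, IsAlgClosed.splits _⟩
  have hbot : y i ∉ (⊥ : Subalgebra k⟮a i⟯ K) := by
    rw [Algebra.mem_bot]
    rintro ⟨w, hw⟩
    exact hmem (hw ▸ w.2)
  obtain ⟨y', hne, hconj⟩ :=
    (notMem_iff_exists_ne_and_isConjRoot hsep (IsAlgClosed.splits _)).mp hbot
  obtain ⟨τ, hτ⟩ := hconj.symm.exists_algEquiv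
  have hτk : ∀ x : k, τ.toRingEquiv (algebraMap k K x) = algebraMap k K x := by
    intro x
    have := τ.commutes (algebraMap k k⟮a i⟯ x)
    rwa [← IsScalarTower.algebraMap_apply] at this
  obtain ⟨π, hπ⟩ := exists_perm_of_ringEquiv hainj τ.toRingEquiv
    (apply_of_map_eq_prod ha (map_eq_of_algEquiv hτk g))
  obtain ⟨ρ, hρ⟩ := exists_perm_of_ringEquiv hyinj τ.toRingEquiv
    (apply_of_map_eq_prod hy (map_eq_of_algEquiv hτk h))
  obtain ⟨z, hz⟩ := hz
  have h1 := congrArg τ.toRingEquiv hz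
  rw [hτk, hz, map_sum] at h1
  simp only [map_mul, hπ, hρ] at h1
  rw [← Equiv.sum_comp ρ⁻¹ (fun j => a (π j) * y (ρ j))] at h1
  have h2 : (1 : Equiv.Perm ι) = π * ρ⁻¹ := hinj (by simpa using h1)
  have h3 : π = ρ := (mul_inv_eq_one.mp h2.symm)
  have h4 : π i = i := by
    apply hainj
    rw [← hπ]
    exact τ.commutes (AdjoinSimple.gen k (a i))
  have h5 : τ (y i) = y i := by
    have := hρ i
    rw [← h3, h4] at this
    exact this
  exact hne (by rw [← hτ, h5])

theorem map_equivMvPolynomial {k K : Type*} [Field k] [Field K] (φ : k →+* K) (R : k[X][X]) :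
    MvPolynomial.map φ (Bivariate.equivMvPolynomial k R) =
      Bivariate.equivMvPolynomial K (R.map (mapRingHom φ)) := by
  have : (MvPolynomial.map φ).comp
      (Bivariate.equivMvPolynomial k : k[X][X] →+* MvPolynomial (Fin 2) k) =
      (Bivariate.equivMvPolynomial K : K[X][X] →+* MvPolynomial (Fin 2) K).comp
        (mapRingHom (mapRingHom φ)) := by
    ext <;> simp
  exact RingHom.congr_fun this R

theorem eval_equivMvPolynomial {k : Type*} [Field k] (R : k[X][X]) (t z : k) :
    MvPolynomial.eval ![t, z] (Bivariate.equivMvPolynomial k R) =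
      (R.map (evalRingHom t)).eval z := by
  have : (MvPolynomial.eval ![t, z]).comp
      (Bivariate.equivMvPolynomial k : k[X][X] →+* MvPolynomial (Fin 2) k) =
      (evalRingHom z).comp (mapRingHom (evalRingHom t)) := by
    ext <;> simp
  exact RingHom.congr_fun this R

/-- A monic, absolutely irreducible `R(T, Z)` over a PAC field has a rational zero whose
`T`-coordinate avoids the zeros of a given nonzero polynomial `d`. -/
theorem IsPAC.exists_point {k : Type*} [Field k] (hPAC : IsPAC k) {R : k[X][X]} (hR : R.Monic)
    (hirr : Irreducible (R.map (mapRingHom (algebraMap k (AlgebraicClosure k)))))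
    {d : (AlgebraicClosure k)[X]} (hd : d ≠ 0) :
    ∃ t z : k, (R.map (evalRingHom t)).eval z = 0 ∧ d.eval (algebraMap k _ t) ≠ 0 := by
  have hinf := hPAC (Bivariate.equivMvPolynomial k R) (by
    rw [map_equivMvPolynomial, MulEquiv.irreducible_iff]; exact hirr)
  by_contra! hcon
  refine hinf (Set.Finite.subset (s := ⋃ t ∈ {t : k | d.eval (algebraMap k _ t) = 0},
    Set.image (fun z => (t, z)) {z : k | (R.map (evalRingHom t)).eval z = 0}) ?_ ?_)
  · refine Set.Finite.biUnion ?_ fun t _ => Set.Finite.image _ ?_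
    · exact ((d.finite_setOfPred_isRoot hd).preimage (algebraMap k _).injective.injOn)
    · exact (finite_setOfPred_isRoot (hR.map _).ne_zero)
  · rintro ⟨t, z⟩ htz
    rw [Set.mem_ofPred_eq, eval_equivMvPolynomial] at htz
    simp only [Set.mem_iUnion, Set.mem_image, Set.mem_ofPred_eq]
    exact ⟨t, hcon t z htz, z, htz, rfl⟩

/-- Outside finitely many `t`, the generic roots `y i` and the factorization of `R` specialize at
`T = t` with the specialized resolvents still pairwise distinct. The excluded values are the zeros
of a nonzero `d ∈ K[T]` divisible by the product of all differences of resolvents. -/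
theorem exists_good_locus {K Ω ι : Type*} [Field K] [IsAlgClosed K] [Field Ω] [Fintype ι]
    [DecidableEq ι]
    {f : K[X] →+* Ω} (hf : Function.Injective f)
    {M : K[X]} (hM : M.Monic) (hdeg : 0 < M.natDegree) {y : ι → Ω} (a : ι → K)
    (hy : M.map (f.comp C) - C (f X) = ∏ i, (X - C (y i)))
    (hinj : Function.Injective (fun σ : Equiv.Perm ι => ∑ i, f (C (a (σ i))) * y i))
    {R : K[X][X]} (hR : R.map f = ∏ σ : Equiv.Perm ι, (X - C (∑ i, f (C (a (σ i))) * y i))) :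
    ∃ d : K[X], d ≠ 0 ∧ ∀ t, d.eval t ≠ 0 → ∃ y' : ι → K,
      M - C t = ∏ i, (X - C (y' i)) ∧
      Function.Injective (fun σ : Equiv.Perm ι => ∑ i, a (σ i) * y' i) ∧
      R.map (evalRingHom t) = ∏ σ : Equiv.Perm ι, (X - C (∑ i, a (σ i) * y' i)) := by
  let := f.toAlgebra
  have : FaithfulSMul K[X] Ω := (faithfulSMul_iff_algebraMap_injective K[X] Ω).mpr hf
  have hyint : ∀ i, IsIntegral K[X] (y i) := by
    intro i
    refine ⟨M.map C - C X, ?_, ?_⟩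
    · apply Monic.sub_of_left (hM.map C)
      rw [degree_map_eq_of_injective C_injective, degree_eq_natDegree hM.ne_zero]
      exact degree_C_le.trans_lt (by exact_mod_cast hdeg)
    · change eval₂ f _ _ = 0
      rw [eval₂_sub, eval₂_map, eval₂_C, root_of_prod hy, sub_self]
  let Y : ι → integralClosure K[X] Ω := fun i => ⟨y i, hyint i⟩
  let g : K[X] →+* integralClosure K[X] Ω := algebraMap K[X] (integralClosure K[X] Ω)
  let incl : integralClosure K[X] Ω →+* Ω := algebraMap (integralClosure K[X] Ω) Ω
  have hincl : Function.Injective incl := Subtype.val_injective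
  have hY : M.map (g.comp C) - C (g X) = ∏ i, (X - C (Y i)) :=
    factor_lift (incl := incl) hincl hy
  let Θ : Equiv.Perm ι → integralClosure K[X] Ω := fun σ => ∑ i, g (C (a (σ i))) * Y i
  have hΘ : ∀ σ, incl (Θ σ) = ∑ i, f (C (a (σ i))) * y i := by
    intro σ
    simp only [Θ, map_sum, map_mul]
    rfl
  have hRB : R.map g = ∏ σ, (X - C (Θ σ)) := by
    apply Polynomial.map_injective incl hincl
    rw [Polynomial.map_map, Polynomial.map_prod]
    simp only [Polynomial.map_sub, map_X, map_C, hΘ]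
    exact hR
  let δ : integralClosure K[X] Ω :=
    ∏ p ∈ (Finset.univ : Finset (Equiv.Perm ι)).offDiag, (Θ p.1 - Θ p.2)
  have hδ : δ ≠ 0 := by
    rw [Finset.prod_ne_zero_iff]
    rintro ⟨σ, ρ⟩ hp h
    rw [Finset.mem_offDiag] at hp
    refine hp.2.2 (hinj ?_)
    change ∑ i, f (C (a (σ i))) * y i = ∑ i, f (C (a (ρ i))) * y i
    rw [← hΘ, ← hΘ, sub_eq_zero.mp h]
  obtain ⟨d, hd, hδd⟩ := IsAlgebraic.exists_nonzero_dvd (R := K[X])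
    (Algebra.IsIntegral.isIntegral δ).isAlgebraic (mem_nonZeroDivisors_of_ne_zero hδ)
  refine ⟨d, hd, fun t ht => ?_⟩
  obtain ⟨ψ, hψ⟩ := exists_specialization (B := integralClosure K[X] Ω) t
  have hψΘ : ∀ σ, ψ (Θ σ) = ∑ i, a (σ i) * ψ (Y i) := by
    intro σ
    simp only [Θ, map_sum, map_mul, g, hψ, eval_C]
  refine ⟨fun i => ψ (Y i), factor_specialize hY hψ, ?_, ?_⟩
  · intro σ ρ h
    by_contra hne
    apply ht
    rw [← hψ]
    apply eq_zero_of_zero_dvd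
    have h0 : ψ δ = 0 := by
      rw [map_prod]
      refine Finset.prod_eq_zero (i := (σ, ρ)) (by simpa using hne) ?_
      rw [map_sub, sub_eq_zero, hψΘ, hψΘ]
      exact h
    rw [← h0]
    exact map_dvd ψ hδd
  · have := congrArg (Polynomial.map ψ) hRB
    rw [Polynomial.map_map, Polynomial.map_prod] at this
    rw [show evalRingHom t = ψ.comp g from RingHom.ext fun p => (hψ p).symm, this]
    simp only [Polynomial.map_sub, map_X, map_C, hψΘ]

theorem exists_eq_prod_roots {Ω ι : Type*} [Field Ω] [IsAlgClosed Ω] [Fintype ι]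
    {p : Polynomial Ω} (hp : p.Monic) (hdeg : p.natDegree = Fintype.card ι) :
    ∃ y : ι → Ω, p = ∏ i, (X - C (y i)) := by
  have hs := IsAlgClosed.splits p
  have hlen : p.roots.toList.length = Fintype.card ι := by
    rw [Multiset.length_toList, ← hdeg, hs.natDegree_eq_card_roots]
  let e : ι ≃ Fin p.roots.toList.length := Fintype.equivFinOfCardEq hlen.symm
  refine ⟨fun i => p.roots.toList[e i], ?_⟩
  have h1 : ∏ j : Fin p.roots.toList.length, (X - C p.roots.toList[j]) =
      (p.roots.toList.map (fun r => X - C r)).prod :=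
    Fin.prod_univ_fun_getElem p.roots.toList (fun r => X - C r)
  rw [Equiv.prod_comp e (fun j => X - C p.roots.toList[j]), h1, ← Multiset.prod_coe,
    ← Multiset.map_coe, Multiset.coe_toList]
  exact hs.eq_prod_roots_of_monic hp
end

/-! ### Realization of extensions -/

section

/-- The inseparable degree is a power of the characteristic and divides the degree. -/
theorem isSeparable_of_finrank_ne_zero {k E : Type*} [Field k] [Field E] [Algebra k E]
    [FiniteDimensional k E] (h : (Module.finrank k E : k) ≠ 0) : Algebra.IsSeparable k E := by
  obtain ⟨q, hq⟩ := ExpChar.exists k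
  obtain ⟨m, hm⟩ := finInsepDegree_eq_pow k E q
  rw [isSeparable_iff_finInsepDegree_eq_one, hm]
  rcases hq with _ | hprime
  · exact one_pow _
  · rcases m with _ | m
    · exact pow_zero _
    · exfalso
      apply h
      rw [← Field.finSepDegree_mul_finInsepDegree k E, hm, pow_succ]
      simp

theorem minpoly_map_eq_prod {k K E : Type*} [Field k] [Field K] [IsAlgClosed K] [Algebra k K]
    [Field E] [Algebra k E] [FiniteDimensional k E] [Algebra.IsSeparable k E] {α : E}
    (hα : IntermediateField.adjoin k {α} = ⊤) :
    Function.Injective (fun φ : E →ₐ[k] K => φ α) ∧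
    (minpoly k α).map (algebraMap k K) = ∏ φ : E →ₐ[k] K, (X - C (φ α)) := by
  have hInteg : IsIntegral k α := Algebra.IsIntegral.isIntegral α
  have hinj : Function.Injective (fun φ : E →ₐ[k] K => φ α) := by
    intro φ χ h
    have : Algebra.adjoin k {α} = ⊤ := by
      rw [← IntermediateField.adjoin_simple_toSubalgebra_of_isAlgebraic hInteg.isAlgebraic, hα]
      rfl
    exact AlgHom.ext_of_adjoin_eq_top this (by simpa using h)
  refine ⟨hinj, ?_⟩
  refine eq_of_monic_of_dvd_of_natDegree_le (monic_prod_X_sub_C _ _)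
    ((minpoly.monic hInteg).map _) ?_ ?_
  · refine Finset.prod_dvd_of_coprime (fun φ _ χ _ h => ?_) fun φ _ => ?_
    · exact pairwise_coprime_X_sub_C hinj h
    · rw [dvd_iff_isRoot, IsRoot, eval_map_algebraMap, aeval_algHom_apply, minpoly.aeval, map_zero]
  · rw [natDegree_map, natDegree_finsetProd_X_sub_C_eq_card, Finset.card_univ,
      AlgHom.card, ← IntermediateField.adjoin.finrank hInteg, hα,
      IntermediateField.finrank_top']

/-- At a critical point of a Morse polynomial the second derivative does not vanish. -/
theorem IsMorse.simple {k : Type*} [Field k] {M : k[X]} (h : IsMorse M)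
    (h0 : derivative (M.map (algebraMap k (AlgebraicClosure k))) ≠ 0)
    (β : AlgebraicClosure k)
    (hβ : (derivative (M.map (algebraMap k (AlgebraicClosure k)))).eval β = 0) :
    (derivative (derivative (M.map (algebraMap k (AlgebraicClosure k))))).eval β ≠ 0 := by
  classical
  intro h2
  have h3 := (one_lt_rootMultiplicity_iff_isRoot h0).mpr ⟨hβ, h2⟩
  rw [← count_roots] at h3
  have := Multiset.nodup_iff_count_le_one.mp h.1 β
  omega

open IntermediateField in
/-- The result for monic `M`, with the constant written as `M - C t`. -/
theorem exists_realization_of_monic {k E : Type*} [Field k] [Field E] [Algebra k E]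
    (hPAC : IsPAC k) {n : ℕ} (hn2 : 2 ≤ n) (hn : (n : k) ≠ 0) {M : k[X]} (hM : M.Monic)
    (hdeg : M.natDegree = n) (hMorse : IsMorse M) (hE : Module.finrank k E = n) :
    ∃ t : k, Irreducible (M - C t) ∧ ∃ x : E, aeval x (M - C t) = 0 ∧ k⟮x⟯ = ⊤ := by
  classical
  have : FiniteDimensional k E := FiniteDimensional.of_finrank_pos (by omega)
  have : Algebra.IsSeparable k E := isSeparable_of_finrank_ne_zero (by rwa [hE])
  let K := AlgebraicClosure k
  let Ω := AlgebraicClosure (FractionRing K[X])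
  let f : K[X] →+* Ω := (algebraMap (FractionRing K[X]) Ω).comp (algebraMap K[X] (FractionRing K[X]))
  have hf : Function.Injective f :=
    (algebraMap (FractionRing K[X]) Ω).injective.comp (IsFractionRing.injective K[X] _)
  have haf : ∀ z : Ω, ∃ p : K[X][X], p ≠ 0 ∧ p.eval₂ f z = 0 := by
    intro z
    have : IsAlgebraic (FractionRing K[X]) z := Algebra.IsAlgebraic.isAlgebraic z
    exact (IsFractionRing.isAlgebraic_iff K[X] (FractionRing K[X]) Ω).mpr this
  obtain ⟨α, hα⟩ := Field.exists_primitive_element k E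
  let ι := E →ₐ[k] K
  let a : ι → K := fun φ => φ α
  obtain ⟨hainj, ha⟩ := minpoly_map_eq_prod (K := K) hα
  have hcard : Fintype.card ι = n := by rw [AlgHom.card, hE]
  set MK : K[X] := M.map (algebraMap k K) with hMK
  have hMKm : MK.Monic := hM.map _
  have hMKdeg : MK.natDegree = n := by rw [hMK, natDegree_map, hdeg]
  have hnK : (n : K) ≠ 0 := by
    have := (map_ne_zero (algebraMap k K)).mpr hn
    rwa [map_natCast] at this
  have hMK' := derivative_ne_zero_of_cast hn2 hnK hMKm hMKdeg
  have hsimple := hMorse.simple hMK'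
  have hval : ∀ β β', (derivative MK).eval β = 0 → (derivative MK).eval β' = 0 →
      MK.eval β = MK.eval β' → β = β' := by
    intro β β' h1 h2 h3
    by_contra hne
    exact hMorse.2 β ((mem_roots hMK').mpr h1) β' ((mem_roots hMK').mpr h2) hne h3
  have hgm : (MK.map (f.comp C) - C (f X)).Monic ∧
      (MK.map (f.comp C) - C (f X)).natDegree = Fintype.card ι := by
    have hd : (C (f X)).degree < (MK.map (f.comp C)).degree := by
      rw [degree_map, degree_eq_natDegree hMKm.ne_zero, hMKdeg]
      exact degree_C_le.trans_lt (by exact_mod_cast (by omega : 0 < n))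
    refine ⟨Monic.sub_of_left (hMKm.map _) hd, ?_⟩
    rw [natDegree_sub_C, natDegree_map, hMKdeg, hcard]
  obtain ⟨y, hy⟩ := exists_eq_prod_roots hgm.1 hgm.2
  have hS := exists_ringEquiv_perm hf haf hn2 hnK hMKm hMKdeg hsimple hval hy
  have hyinj := injective_roots hf hMK' hy
  have hθ := resolvent_injective (a := a) hyinj hainj (by rw [hcard]; exact hnK) hS
  obtain ⟨R, hRm, hRprod, hRirr⟩ := exists_resolvent hf haf hyinj hainj hM (by omega) hy ha hS hθ
  obtain ⟨d, hd, hgood⟩ := exists_good_locus hf hMKm (by omega) a hy hθ hRprod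
  obtain ⟨t, z, hz, ht⟩ := hPAC.exists_point hRm hRirr hd
  obtain ⟨y', hy', hy'inj, hRt⟩ := hgood _ ht
  -- the rational zero is one of the specialised resolvents
  obtain ⟨σ, hσ⟩ : ∃ σ : Equiv.Perm ι, algebraMap k K z = ∑ i, a (σ i) * y' i := by
    have h1 := congrArg (eval (algebraMap k K z)) hRt
    have h2 : (evalRingHom (algebraMap k K t)).comp (mapRingHom (algebraMap k K)) =
        (algebraMap k K).comp (evalRingHom t) := by
      ext <;> simp
    rw [Polynomial.map_map, h2, ← Polynomial.map_map, eval_map_apply, hz, map_zero, eq_comm,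
      eval_prod, Finset.prod_eq_zero_iff] at h1
    obtain ⟨σ, -, h3⟩ := h1
    rw [eval_sub, eval_X, eval_C, sub_eq_zero] at h3
    exact ⟨σ, h3⟩
  let w : ι → K := fun i => y' (σ⁻¹ i)
  have hw : (M - C t).map (algebraMap k K) = ∏ i, (X - C (w i)) := by
    rw [Polynomial.map_sub, map_C, Equiv.prod_comp σ⁻¹ (fun i => X - C (y' i))]
    exact hy'
  have hwres : Function.Injective (fun ρ : Equiv.Perm ι => ∑ i, a (ρ i) * w i) := by
    intro ρ ρ' h
    have key : ∀ ρ : Equiv.Perm ι, ∑ i, a (ρ i) * w i = ∑ i, a ((ρ * σ) i) * y' i := by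
      intro ρ
      rw [← Equiv.sum_comp σ]
      simp [w]
    simp only [key] at h
    exact mul_right_cancel (hy'inj h)
  have hwz : algebraMap k K z = ∑ i, a i * w i := by
    rw [hσ, ← Equiv.sum_comp σ (fun i => a i * w i)]
    simp [w]
  have hwinj : Function.Injective w := by
    intro i j hij
    by_contra hne
    have h1 : Equiv.swap i j = 1 := hwres (by
      change ∑ l, a (Equiv.swap i j l) * w l = ∑ l, a l * w l
      rw [← Equiv.sum_comp (Equiv.swap i j)]
      refine Finset.sum_congr rfl fun l _ => ?_
      rw [Equiv.swap_apply_self]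
      congr 1
      by_cases hli : l = i
      · rw [hli, Equiv.swap_apply_left, hij]
      by_cases hlj : l = j
      · rw [hlj, Equiv.swap_apply_right, hij]
      · rw [Equiv.swap_apply_of_ne_of_ne hli hlj])
    exact hne (Equiv.swap_eq_one_iff.mp h1)
  have hwa := mem_adjoin_of_resolvent ha hw hainj hwinj hwres ⟨z, hwz⟩
  have haw := mem_adjoin_of_resolvent hw ha hwinj hainj (by
      have key : ∀ ρ : Equiv.Perm ι, ∑ i, w (ρ i) * a i = ∑ i, a (ρ⁻¹ i) * w i := by
        intro ρ
        rw [← Equiv.sum_comp ρ (fun i => a (ρ⁻¹ i) * w i)]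
        simp [mul_comm]
      intro ρ ρ' h
      have h' : ∑ i, w (ρ i) * a i = ∑ i, w (ρ' i) * a i := h
      rw [key, key] at h'
      exact inv_injective (hwres h')) ⟨z, by
        rw [hwz]; exact Finset.sum_congr rfl fun i _ => mul_comm _ _⟩
  let φ : ι := IsAlgClosed.lift
  obtain ⟨x, hx⟩ : ∃ x : E, φ x = w φ := by
    have h1 : k⟮a φ⟯ ≤ φ.fieldRange := by
      rw [adjoin_simple_le_iff]
      exact ⟨α, rfl⟩
    exact h1 (hwa φ)
  have hxtop : k⟮x⟯ = ⊤ := by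
    have h1 : φ α ∈ k⟮w φ⟯ := haw φ
    rw [← hx, ← Set.image_singleton, ← adjoin_map] at h1
    obtain ⟨e, he, heα⟩ := h1
    rw [← top_le_iff, ← hα, adjoin_simple_le_iff]
    rwa [← φ.injective heα]
  have hx0 : aeval x (M - C t) = 0 := by
    apply φ.toRingHom.injective
    change φ (aeval x (M - C t)) = φ 0
    rw [← aeval_algHom_apply φ, hx, map_zero, ← eval_map_algebraMap, hw, eval_prod,
      Finset.prod_eq_zero (Finset.mem_univ φ) (by simp)]
  have hxint : IsIntegral k x := Algebra.IsIntegral.isIntegral x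
  have hmt : (M - C t).Monic := by
    apply Monic.sub_of_left hM
    rw [degree_eq_natDegree hM.ne_zero, hdeg]
    exact degree_C_le.trans_lt (by exact_mod_cast (by omega : 0 < n))
  refine ⟨t, ?_, x, hx0, hxtop⟩
  rw [eq_of_monic_of_dvd_of_natDegree_le (minpoly.monic hxint) hmt (minpoly.dvd k x hx0) ?_]
  · exact minpoly.irreducible hxint
  · rw [natDegree_sub_C, hdeg, ← adjoin.finrank hxint, hxtop, finrank_top', hE]

end

theorem stmt_2 (k E : Type*) [Field k] [Field E] [Algebra k E]
    (hPAC : IsPAC k) (n : ℕ) (hn : 2 ≤ n)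
    (hchar : IsUnit ((n : ℕ) : k))
    (M : Polynomial k) (hM : M.natDegree = n) (hMorse : IsMorse M)
    (hdeg : Module.finrank k E = n) :
    ∃ b : k, Irreducible (M + C b) ∧
      ∃ x : E, Polynomial.aeval x (M + C b) = 0 ∧
        IntermediateField.adjoin k {x} = ⊤ := by
  have hM0 : M ≠ 0 := by rintro rfl; simp at hM; omega
  set c := M.leadingCoeff with hc
  have hc0 : c ≠ 0 := leadingCoeff_ne_zero.mpr hM0
  have hci : c⁻¹ ≠ 0 := inv_ne_zero hc0
  have hMorse' : IsMorse (C c⁻¹ * M) := by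
    have h0 : algebraMap k (AlgebraicClosure k) c⁻¹ ≠ 0 := (_root_.map_ne_zero _).mpr hci
    rw [IsMorse, Polynomial.map_mul, map_C, derivative_C_mul, roots_C_mul _ h0]
    refine ⟨hMorse.1, fun β hβ β' hβ' hne h => hMorse.2 β hβ β' hβ' hne ?_⟩
    rw [eval_C_mul, eval_C_mul] at h
    exact mul_left_cancel₀ h0 h
  have hmon : (C c⁻¹ * M).Monic := by
    rw [mul_comm]
    exact monic_mul_leadingCoeff_inv hM0
  obtain ⟨t, hirr, x, hx, hxtop⟩ := exists_realization_of_monic (E := E) hPAC hn hchar.ne_zero hmon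
    (by rw [natDegree_C_mul hci, hM]) hMorse' hdeg
  have heq : M + C (-(c * t)) = C c * (C c⁻¹ * M - C t) := by
    rw [mul_sub, ← mul_assoc, ← C_mul, mul_inv_cancel₀ hc0, C_1, one_mul, ← C_mul, C_neg,
      sub_eq_add_neg]
  refine ⟨-(c * t), ?_, x, ?_, hxtop⟩
  · rw [heq, irreducible_isUnit_mul (isUnit_C.mpr hc0.isUnit)]
    exact hirr
  · rw [heq, map_mul, hx, mul_zero]
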